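/- arXiv:1901.10659 — 6 statements merged into one kernel-verified Lean document; each statement's English description precedes it below -/
import Mathlib

section
/- Let 𝔽 be a field, let d ≥ 1 be an integer, and let V be a (d+1)-dimensional vector space over 𝔽. Let {E*_i}_{i=0}^{d} be a system of mutually orthogonal idempotents in End(V). Let A ∈ End(V) satisfy E*_i A E*_j = 0 if |i−j| > 1 and E*_i A E*_j ≠ 0 if |i−j| = 1 (0 ≤ i,j ≤ d). Let θ*_0,…,θ*_d ∈ 𝔽 and define A* = Σ_{i=0}^{d} θ*_i E*_i. Let θ_0,…,θ_d ∈ 𝔽 and set a_i = tr(E*_i A) for 0 ≤ i ≤ d. Suppose: (i) θ_i ≠ θ_j whenever i ≠ j (0 ≤ i,j ≤ d); (ii) θ*_i ≠ θ*_0 for 1 ≤ i ≤ d; (iii) there exist β, γ* ∈ 𝔽 such that γ* = θ*_{i−1} − βθ*_i + θ*_{i+1} for 1 ≤ i ≤ d−1, and θ*_{−1}, θ*_{d+1} ∈ 𝔽 are defined so that this equation also holds at i = 0 and i = d; (iv) there exist nonzero vectors v_0, v_1 ∈ V such that A v_0 = θ_0 v_0, A v_1 = θ_1 v_1, and A* v_0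 − v_1 ∈ 𝔽 v_0; (v) there exist γ, ω, η* ∈ 𝔽 such that a_i(θ*_i − θ*_{i−1})(θ*_i − θ*_{i+1}) = γθ*_i² + ωθ*_i + η* for 0 ≤ i ≤ d; (vi) θ_{i−1} − βθ_i + θ_{i+1} = γ for 1 ≤ i ≤ d−1. Then A, A* is a Leonard pair on V; moreover, A is multiplicity-free with eigenvalues θ_0,…,θ_d, A* is multiplicity-free with eigenvalues θ*_0,…,θ*_d, and (A; {E_i}_{i=0}^{d}; A*; {E*_i}_{i=0}^{d}) is a Leonard system on V, where E_i denotes the primitive idempotent of A corresponding to θ_i. -/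
namespace LeonardPaper

variable {F : Type*} [Field F] {V : Type*} [AddCommGroup V] [Module F V]

/-- A square matrix is irreducible tridiagonal: entries vanish off the three central
diagonals, and all subdiagonal and superdiagonal entries are nonzero. -/
def IsIrredTridiag {n : ℕ} (M : Matrix (Fin n) (Fin n) F) : Prop :=
  (∀ i j : Fin n, ((i : ℕ) + 1 < (j : ℕ) ∨ (j : ℕ) + 1 < (i : ℕ)) → M i j = 0) ∧
  (∀ i j : Fin n, ((i : ℕ) + 1 = (j : ℕ) ∨ (j : ℕ) + 1 = (i : ℕ)) → M i j ≠ 0)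

/-- Leonard pair on `V` (of dimension `d+1`). -/
def IsLeonardPair (d : ℕ) (A As : Module.End F V) : Prop :=
  (∃ bas : Module.Basis (Fin (d + 1)) F V,
      IsIrredTridiag (LinearMap.toMatrix bas bas A) ∧ (LinearMap.toMatrix bas bas As).IsDiag) ∧
  (∃ bas : Module.Basis (Fin (d + 1)) F V,
      IsIrredTridiag (LinearMap.toMatrix bas bas As) ∧ (LinearMap.toMatrix bas bas A).IsDiag)

/-- A system of mutually orthogonal (rank-one) idempotents in `End(V)`. -/
def MOISys (d : ℕ) (E : Fin (d + 1) → Module.End F V) : Prop :=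
  (∀ i j, E i * E j = if i = j then E i else 0) ∧
  ∀ i, Module.finrank F (LinearMap.range (E i)) = 1

/-- `E` is the system of primitive idempotents of a multiplicity-free `A`,
with eigenvalue ordering `θ`. -/
def IdempSysOf (d : ℕ) (A : Module.End F V) (θ : Fin (d + 1) → F)
    (E : Fin (d + 1) → Module.End F V) : Prop :=
  MOISys d E ∧ (∑ i, E i) = 1 ∧ Function.Injective θ ∧ ∀ i, A * E i = θ i • E i

/-- Leonard system. -/
def IsLeonardSystem (d : ℕ) (A : Module.End F V) (E : Fin (d + 1) → Module.End F V)
    (As : Module.End F V) (Es : Fin (d + 1) → Module.End F V) : Prop :=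
  (∃ θ, IdempSysOf d A θ E) ∧ (∃ θs, IdempSysOf d As θs Es) ∧
  (∀ i j : Fin (d + 1), ((i : ℕ) + 1 < (j : ℕ) ∨ (j : ℕ) + 1 < (i : ℕ)) → Es i * A * Es j = 0) ∧
  (∀ i j : Fin (d + 1), ((i : ℕ) + 1 = (j : ℕ) ∨ (j : ℕ) + 1 = (i : ℕ)) → Es i * A * Es j ≠ 0) ∧
  (∀ i j : Fin (d + 1), ((i : ℕ) + 1 < (j : ℕ) ∨ (j : ℕ) + 1 < (i : ℕ)) → E i * As * E j = 0) ∧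
  (∀ i j : Fin (d + 1), ((i : ℕ) + 1 = (j : ℕ) ∨ (j : ℕ) + 1 = (i : ℕ)) → E i * As * E j ≠ 0)

/-- The tridiagonal matrix with diagonal `a`, superdiagonal `b`, subdiagonal `c`. -/
def triMat (d : ℕ) (a b c : ℕ → F) : Matrix (Fin (d + 1)) (Fin (d + 1)) F :=
  Matrix.of fun i j : Fin (d + 1) =>
    if (i : ℕ) = (j : ℕ) then a i
    else if (i : ℕ) + 1 = (j : ℕ) then b i
    else if (j : ℕ) + 1 = (i : ℕ) then c i
    else 0


lemma sum_eq_of_tri {d : ℕ} (f : Fin (d + 1) → F) (k : ℕ) (hk : k + 1 < d + 1)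
    (hlo : ∀ j : Fin (d + 1), (j : ℕ) ≤ k → f j = 0)
    (hhi : ∀ j : Fin (d + 1), k + 1 < (j : ℕ) → f j = 0) : ∑ j, f j = f ⟨k + 1, hk⟩ := by
  apply Finset.sum_eq_single
  · intro j _ hj
    rcases lt_trichotomy (j : ℕ) (k + 1) with h | h | h
    · exact hlo j (by omega)
    · exact absurd (Fin.ext h) hj
    · exact hhi j h
  · simp

/-- An eigenvector of an irreducible tridiagonal map with vanishing zeroth coordinate is zero. -/
lemma tri_eig {d : ℕ} (b : Module.Basis (Fin (d + 1)) F V) (A : Module.End F V)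
    (hM : IsIrredTridiag (LinearMap.toMatrix b b A)) (u : V) (l : F) (hu : A u = l • u)
    (h0 : b.repr u 0 = 0) : u = 0 := by
  have key : ∀ n : ℕ, ∀ k : Fin (d + 1), (k : ℕ) ≤ n → b.repr u k = 0 := by
    intro n
    induction n with
    | zero =>
      intro k hk
      have : k = 0 := Fin.ext (by simpa using hk)
      rw [this, h0]
    | succ n ih =>
      intro k hk
      rcases Nat.lt_or_ge (k : ℕ) (n + 1) with h | h
      · exact ih k (by omega)
      have hkn : (k : ℕ) = n + 1 := by omega
      have hkd := k.2
      let m : Fin (d + 1) := ⟨n, by omega⟩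
      have e1 := congrFun (LinearMap.toMatrix_mulVec_repr b b A u) m
      rw [hu, map_smul, Finsupp.smul_apply, ih m (le_refl n), smul_zero] at e1
      simp only [Matrix.mulVec, dotProduct] at e1
      rw [sum_eq_of_tri _ n (by omega) (fun j hj => by rw [ih j hj, mul_zero])
        (fun j hj => by rw [hM.1 m j (Or.inl hj), zero_mul])] at e1
      have hk' : k = ⟨n + 1, by omega⟩ := Fin.ext hkn
      rw [hk']
      exact (mul_eq_zero.mp e1).resolve_left (hM.2 _ _ (Or.inl rfl))
  apply b.ext_elem
  intro i
  rw [key i i le_rfl]; simp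

lemma apply_basis {d : ℕ} (b : Module.Basis (Fin (d + 1)) F V) (A : Module.End F V) (k) :
    A (b k) = ∑ i, LinearMap.toMatrix b b A i k • b i := by
  simp only [LinearMap.toMatrix_apply]
  exact (b.sum_repr (A (b k))).symm

lemma tri_gen {d : ℕ} (b : Module.Basis (Fin (d + 1)) F V) (A : Module.End F V)
    (hM : IsIrredTridiag (LinearMap.toMatrix b b A)) (W : Submodule F V)
    (hW : ∀ w ∈ W, A w ∈ W) (h0 : b 0 ∈ W) : W = ⊤ := by
  have key : ∀ n : ℕ, ∀ k : Fin (d + 1), (k : ℕ) ≤ n → b k ∈ W := by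
    intro n
    induction n with
    | zero =>
      intro k hk
      have : k = 0 := Fin.ext (by simpa using hk)
      rw [this]; exact h0
    | succ n ih =>
      intro k hk
      rcases Nat.lt_or_ge (k : ℕ) (n + 1) with h | h
      · exact ih k (by omega)
      have hkn : (k : ℕ) = n + 1 := by omega
      have hkd := k.2
      let m : Fin (d + 1) := ⟨n, by omega⟩
      have hne : LinearMap.toMatrix b b A k m ≠ 0 := hM.2 _ _ (Or.inr hkn.symm)
      have e1 := apply_basis b A m
      rw [← Finset.add_sum_erase _ _ (Finset.mem_univ k)] at e1
      have e2 : ∑ i ∈ Finset.univ.erase k, LinearMap.toMatrix b b A i m • b i ∈ W := by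
        apply Submodule.sum_mem
        intro i hi
        rcases lt_trichotomy (i : ℕ) (k : ℕ) with h | h | h
        · exact W.smul_mem _ (ih i (by omega))
        · exact absurd (Fin.ext h) (Finset.ne_of_mem_erase hi)
        · rw [hM.1 i m (Or.inr (show n + 1 < (i : ℕ) by omega)), zero_smul]; exact W.zero_mem
      have e3 : LinearMap.toMatrix b b A k m • b k ∈ W := by
        have := W.sub_mem (hW _ (ih m le_rfl)) e2
        rwa [e1, add_sub_cancel_right] at this
      exact (W.smul_mem_iff hne).mp e3
  rw [eq_top_iff, ← b.span_eq, Submodule.span_le]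
  rintro _ ⟨k, rfl⟩
  exact key k k le_rfl

/-- The rank-one projections attached to a basis. -/
noncomputable def bproj {d : ℕ} (b : Module.Basis (Fin (d + 1)) F V) (i : Fin (d + 1)) : Module.End F V :=
  (b.coord i).smulRight (b i)

lemma bproj_apply {d : ℕ} (b : Module.Basis (Fin (d + 1)) F V) (i) (w : V) :
    bproj b i w = b.repr w i • b i := rfl

lemma bproj_triple {d : ℕ} (b : Module.Basis (Fin (d + 1)) F V) (A : Module.End F V) (i j) :
    bproj b i * A * bproj b j = 0 ↔ LinearMap.toMatrix b b A i j = 0 := by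
  constructor
  · intro h
    have h2 := LinearMap.congr_fun h (b j)
    simp only [Module.End.mul_apply, bproj_apply, Module.Basis.repr_self, Finsupp.single_eq_same,
      one_smul, LinearMap.zero_apply] at h2
    rw [LinearMap.toMatrix_apply]
    exact (smul_eq_zero.mp h2).resolve_right (b.ne_zero i)
  · intro h
    rw [LinearMap.toMatrix_apply] at h
    ext w
    simp [Module.End.mul_apply, bproj_apply, h]

lemma bproj_sys {d : ℕ} (b : Module.Basis (Fin (d + 1)) F V) (A : Module.End F V)
    (θ : Fin (d + 1) → F) (hθ : Function.Injective θ) (hA : ∀ i, A (b i) = θ i • b i) :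
    IdempSysOf d A θ (bproj b) := by
  refine ⟨⟨?_, ?_⟩, ?_, hθ, ?_⟩
  · intro i j
    apply b.ext
    intro k
    by_cases hij : i = j
    · subst hij
      simp [Module.End.mul_apply, bproj_apply]
    · rw [if_neg hij]
      rw [Module.End.mul_apply, bproj_apply, bproj_apply, map_smul, b.repr_self j,
        Finsupp.smul_apply, Finsupp.single_apply, if_neg (Ne.symm hij), smul_zero, zero_smul]
      rfl
  · intro i
    have : LinearMap.range (bproj b i) = Submodule.span F {b i} := by
      apply le_antisymm
      · rintro _ ⟨w, rfl⟩
        exact Submodule.mem_span_singleton.mpr ⟨_, rfl⟩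
      · rw [Submodule.span_singleton_le_iff_mem]
        exact ⟨b i, by simp [bproj_apply]⟩
    rw [this, finrank_span_singleton (b.ne_zero i)]
  · ext w
    simp only [LinearMap.sum_apply, bproj_apply, Module.End.one_apply]
    exact b.sum_repr w
  · intro i
    ext w
    rw [Module.End.mul_apply, bproj_apply, map_smul, hA, LinearMap.smul_apply, bproj_apply,
      smul_comm]

/-- A system of orthogonal idempotents comes from a basis. -/
lemma exists_basis_of_MOISys {d : ℕ} (hdim : Module.finrank F V = d + 1)
    (Es : Fin (d + 1) → Module.End F V) (hEs : MOISys d Es) :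
    ∃ e : Module.Basis (Fin (d + 1)) F V, Es = bproj e := by
  have hx : ∀ i, ∃ x : V, x ≠ 0 ∧ ∀ w, ∃ c : F, Es i w = c • x := by
    intro i
    obtain ⟨⟨x, hx⟩, hx0, hxs⟩ := finrank_eq_one_iff'.mp (hEs.2 i)
    refine ⟨x, fun h => hx0 (Subtype.ext h), fun w => ?_⟩
    obtain ⟨c, hc⟩ := hxs ⟨Es i w, ⟨w, rfl⟩⟩
    exact ⟨c, (congrArg Subtype.val hc).symm⟩
  choose x hx0 hxs using hx
  have hself : ∀ i, Es i (x i) = x i := by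
    intro i
    have hne : Es i ≠ 0 := by
      intro h
      have := hEs.2 i
      rw [h, LinearMap.range_zero, finrank_bot] at this
      omega
    obtain ⟨w, hw⟩ : ∃ w, Es i w ≠ 0 := by
      by_contra! h
      exact hne (LinearMap.ext h)
    obtain ⟨c, hc⟩ := hxs i w
    have hc0 : c ≠ 0 := by rintro rfl; exact hw (by rw [hc, zero_smul])
    have h2 := LinearMap.congr_fun (hEs.1 i i) w
    rw [if_pos rfl, Module.End.mul_apply, hc, map_smul] at h2
    exact smul_right_injective V hc0 h2
  have hoth : ∀ i j, i ≠ j → Es i (x j) = 0 := by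
    intro i j hij
    have h2 := LinearMap.congr_fun (hEs.1 i j) (x j)
    rwa [if_neg hij, Module.End.mul_apply, hself] at h2
  have hli : LinearIndependent F x := by
    rw [Fintype.linearIndependent_iff]
    intro g hg i
    have h2 := congrArg (Es i) hg
    rw [map_sum, map_zero, Finset.sum_eq_single i] at h2
    · rw [map_smul, hself] at h2
      exact (smul_eq_zero.mp h2).resolve_right (hx0 i)
    · intro j _ hj
      rw [map_smul, hoth i j (Ne.symm hj), smul_zero]
    · simp
  let e := basisOfLinearIndependentOfCardEqFinrank hli (by simp [hdim])
  have he : ∀ i, e i = x i := fun i => by simp [e]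
  refine ⟨e, funext fun i => e.ext fun j => ?_⟩
  rw [bproj_apply, e.repr_self]
  by_cases hij : i = j
  · subst hij; simp [he, hself]
  · rw [he, hoth i j hij, Finsupp.single_apply, if_neg (Ne.symm hij), zero_smul]

/-- Askey-Wilson relation. -/
lemma AW_rel {d : ℕ} (e : Module.Basis (Fin (d + 1)) F V) (A As : Module.End F V)
    (hfar : ∀ i j : Fin (d + 1), ((i : ℕ) + 1 < (j : ℕ) ∨ (j : ℕ) + 1 < (i : ℕ)) →
      LinearMap.toMatrix e e A i j = 0)
    (θs : ℤ → F) (hAs : ∀ i, As (e i) = θs ((i : ℕ) : ℤ) • e i) (a : ℕ → F)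
    (ha : ∀ i : Fin (d + 1), a i = LinearMap.toMatrix e e A i i)
    (β γs : F)
    (h3 : ∀ i : ℤ, 0 ≤ i → i ≤ d → γs = θs (i - 1) - β * θs i + θs (i + 1))
    (γ ω ηs : F)
    (h5 : ∀ i : ℕ, i ≤ d →
      a i * ((θs i - θs ((i : ℤ) - 1)) * (θs i - θs ((i : ℤ) + 1)))
        = γ * θs i ^ 2 + ω * θs i + ηs) :
    ∃ ρ : F, ∀ w : V, As (As (A w)) - β • As (A (As w)) + A (As (As w))
      - γs • (A (As w) + As (A w)) - ρ • A w = γ • As (As w) + ω • As w + ηs • w := by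
  let P : ℤ → F := fun i => θs i ^ 2 - β * θs i * θs (i - 1) + θs (i - 1) ^ 2
    - γs * (θs i + θs (i - 1))
  have hP : ∀ n : ℕ, n ≤ d + 1 → P n = P 0 := by
    intro n
    induction n with
    | zero => intro _; rfl
    | succ n ih =>
      intro hn
      rw [← ih (by omega)]
      have h := h3 n (by omega) (by omega)
      simp only [P]
      push_cast
      rw [add_sub_cancel_right]
      linear_combination (θs (n - 1) - θs (n + 1)) * h
  refine ⟨P 0, fun w => ?_⟩
  have hrepr : ∀ (u : V) i, e.repr (As u) i = θs ((i : ℕ) : ℤ) * e.repr u i := by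
    intro u i
    have hm := congrFun (LinearMap.toMatrix_mulVec_repr e e As u) i
    rw [← hm]
    simp only [Matrix.mulVec, dotProduct]
    rw [Finset.sum_eq_single i]
    · rw [LinearMap.toMatrix_apply, hAs]; simp
    · intro j _ hj
      rw [LinearMap.toMatrix_apply, hAs]; simp [Finsupp.single_apply, hj]
    · simp
  suffices H : (As * As * A - β • (As * A * As) + A * As * As - γs • (A * As + As * A) - P 0 • A
      : Module.End F V) = γ • (As * As) + ω • As + ηs • 1 by
    have := LinearMap.congr_fun H w
    simpa [Module.End.mul_apply] using this
  apply e.ext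
  intro j
  apply e.ext_elem
  intro i
  simp only [LinearMap.sub_apply, LinearMap.add_apply, LinearMap.smul_apply, Module.End.mul_apply,
    Module.End.one_apply, hAs, map_smul, map_add, map_sub, Finsupp.add_apply, Finsupp.sub_apply,
    Finsupp.smul_apply, smul_eq_mul, hrepr]
  rw [← LinearMap.toMatrix_apply e e A i j]
  set T := LinearMap.toMatrix e e A i j with hT
  have hi := i.2
  have hj := j.2
  by_cases hij : i = j
  · subst hij
    rw [← ha i] at hT
    rw [e.repr_self, Finsupp.single_eq_same, hT]
    have q1 := hP i (by omega)
    have q3 := h3 i (by omega) (by omega)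
    have q5 := h5 i (by omega)
    rw [← q1]
    simp only [P]
    linear_combination q5 - a i * (θs i - θs (i - 1)) * q3
  · rw [e.repr_self, Finsupp.single_apply, if_neg (fun h => hij h.symm)]
    have hij' : (i : ℕ) ≠ j := fun h => hij (Fin.ext h)
    by_cases hf : ((i : ℕ) + 1 < (j : ℕ) ∨ (j : ℕ) + 1 < (i : ℕ))
    · rw [hT, hfar i j hf]; ring
    · rcases (by omega : (i : ℕ) = j + 1 ∨ (j : ℕ) = i + 1) with h | h
      · have q := hP i (by omega)
        simp only [P] at q ⊢
        rw [h] at q ⊢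
        push_cast at q ⊢
        rw [add_sub_cancel_right] at q
        linear_combination T * q
      · have q := hP j (by omega)
        simp only [P] at q ⊢
        rw [h] at q ⊢
        push_cast at q ⊢
        rw [add_sub_cancel_right] at q
        linear_combination T * q

/-- Symmetrizing form. -/
lemma exists_form {d : ℕ} (e : Module.Basis (Fin (d + 1)) F V) (A As : Module.End F V)
    (hA : IsIrredTridiag (LinearMap.toMatrix e e A))
    (θs : Fin (d + 1) → F) (hAs : ∀ i, As (e i) = θs i • e i) :
    ∃ B : V →ₗ[F] V →ₗ[F] F, (∀ u w, B (A u) w = B u (A w)) ∧ (∀ u w, B (As u) w = B u (As w)) ∧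
      ∀ u, (∀ w, B u w = 0) → u = 0 := by
  set T := LinearMap.toMatrix e e A with hT
  let T' : ℕ → ℕ → F := fun i j =>
    if h : i < d + 1 ∧ j < d + 1 then T ⟨i, h.1⟩ ⟨j, h.2⟩ else 1
  let D : ℕ → F := fun n => Nat.rec 1 (fun i x => x * T' i (i + 1) / T' (i + 1) i) n
  have hDs : ∀ n, D (n + 1) = D n * T' n (n + 1) / T' (n + 1) n := fun n => rfl
  have hT1 : ∀ n, T' n (n + 1) ≠ 0 := by
    intro n
    simp only [T']
    split_ifs with h
    · exact hA.2 _ _ (Or.inl rfl)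
    · exact one_ne_zero
  have hT2 : ∀ n, T' (n + 1) n ≠ 0 := by
    intro n
    simp only [T']
    split_ifs with h
    · exact hA.2 _ _ (Or.inr rfl)
    · exact one_ne_zero
  have hD : ∀ n, D n ≠ 0 := by
    intro n
    induction n with
    | zero => exact one_ne_zero
    | succ n ih => rw [hDs]; exact div_ne_zero (mul_ne_zero ih (hT1 n)) (hT2 n)
  have hDT : ∀ n, D (n + 1) * T' (n + 1) n = D n * T' n (n + 1) := by
    intro n
    rw [hDs, div_mul_cancel₀ _ (hT2 n)]
  have hDT' : ∀ i j : Fin (d + 1), (i : ℕ) + 1 = j → D j * T j i = D i * T i j := by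
    intro i j hij
    have := hDT i
    have hj := j.2
    have e1 : T' (i + 1) i = T j i := by
      simp only [T']
      rw [dif_pos ⟨by omega, by omega⟩]
      congr 1; exact Fin.ext hij
    have e2 : T' i (i + 1) = T i j := by
      simp only [T']
      rw [dif_pos ⟨by omega, by omega⟩]
      congr 1; exact Fin.ext hij
    rwa [e1, e2, hij] at this
  have hsym : ∀ i j : Fin (d + 1), D j * T j i = D i * T i j := by
    intro i j
    by_cases hf : ((i : ℕ) + 1 < (j : ℕ) ∨ (j : ℕ) + 1 < (i : ℕ))
    · rw [hA.1 i j hf, hA.1 j i hf.symm, mul_zero, mul_zero]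
    · rcases (by omega : (i : ℕ) = j ∨ (i : ℕ) + 1 = j ∨ (j : ℕ) + 1 = i) with h | h | h
      · rw [Fin.ext h]
      · exact hDT' i j h
      · exact (hDT' j i h).symm
  let B : V →ₗ[F] V →ₗ[F] F := ∑ k : Fin (d + 1), (e.coord k).smulRight (D k • e.coord k)
  have hB : ∀ u w, B u w = ∑ k : Fin (d + 1), e.repr u k * (D k * e.repr w k) := by
    intro u w
    simp [B, LinearMap.sum_apply]
  have hBe : ∀ u j, B u (e j) = e.repr u j * D j := by
    intro u j
    rw [hB, Finset.sum_eq_single j]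
    · simp
    · intro k _ hk; simp [Finsupp.single_apply, Ne.symm hk]
    · simp
  have hBe' : ∀ u j, B (e j) u = e.repr u j * D j := by
    intro u j
    rw [hB, Finset.sum_eq_single j]
    · simp [mul_comm]
    · intro k _ hk; simp [Finsupp.single_apply, Ne.symm hk]
    · simp
  refine ⟨B, ?_, ?_, ?_⟩
  · intro u w
    have : B ∘ₗ A = B.compl₂ A := by
      refine e.ext fun i => e.ext fun j => ?_
      rw [LinearMap.comp_apply, LinearMap.compl₂_apply, hBe, hBe', ← LinearMap.toMatrix_apply e e A,
        ← LinearMap.toMatrix_apply e e A, mul_comm, mul_comm _ (D i), ← hT]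
      exact hsym i j
    exact LinearMap.congr_fun (LinearMap.congr_fun this u) w
  · intro u w
    have : B ∘ₗ As = B.compl₂ As := by
      refine e.ext fun i => e.ext fun j => ?_
      rw [LinearMap.comp_apply, LinearMap.compl₂_apply, hBe, hBe', hAs, hAs]
      by_cases hij : i = j
      · subst hij; rfl
      · simp [Finsupp.single_apply, hij, Ne.symm hij]
    exact LinearMap.congr_fun (LinearMap.congr_fun this u) w
  · intro u hu
    apply e.ext_elem
    intro i
    have := hu (e i)
    rw [hBe] at this
    rw [(mul_eq_zero.mp this).resolve_right (hD i)]; simp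

/-- Nonexistence of proper common invariant subspaces containing an eigenvector of `A`. -/
lemma irred {d : ℕ} (e : Module.Basis (Fin (d + 1)) F V) (A As : Module.End F V)
    (hA : IsIrredTridiag (LinearMap.toMatrix e e A))
    (θs : Fin (d + 1) → F) (hAs : ∀ i, As (e i) = θs i • e i)
    (hθs : ∀ i, i ≠ 0 → θs i ≠ θs 0) (W : Submodule F V)
    (hWA : ∀ w ∈ W, A w ∈ W) (hWAs : ∀ w ∈ W, As w ∈ W) (v : V) (hv : v ∈ W) (hv0 : v ≠ 0)
    (l : F) (hl : A v = l • v) : W = ⊤ := by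
  have hc : e.repr v 0 ≠ 0 := fun h => hv0 (tri_eig e A hA v l hl h)
  apply tri_gen e A hA W hWA
  have key : ∀ s : Finset (Fin (d + 1)), 0 ∉ s → ∃ w ∈ W, e.repr w 0 ≠ 0 ∧
      ∀ i ∈ s, e.repr w i = 0 := by
    intro s
    induction s using Finset.induction_on with
    | empty => intro _; exact ⟨v, hv, hc, by simp⟩
    | insert k s hk ih =>
      intro h0
      rw [Finset.mem_insert, not_or] at h0
      obtain ⟨w, hw, hw0, hws⟩ := ih h0.2
      have hrepr : ∀ (u : V) i, e.repr (As u) i = θs i * e.repr u i := by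
        intro u i
        have hm := congrFun (LinearMap.toMatrix_mulVec_repr e e As u) i
        rw [← hm]
        simp only [Matrix.mulVec, dotProduct]
        rw [Finset.sum_eq_single i]
        · rw [LinearMap.toMatrix_apply, hAs]; simp
        · intro j _ hj
          rw [LinearMap.toMatrix_apply, hAs]; simp [Finsupp.single_apply, hj]
        · simp
      refine ⟨As w - θs k • w, W.sub_mem (hWAs w hw) (W.smul_mem _ hw), ?_, ?_⟩
      · rw [map_sub, map_smul, Finsupp.sub_apply, Finsupp.smul_apply, hrepr, smul_eq_mul, ← sub_mul]
        exact mul_ne_zero (sub_ne_zero.mpr (hθs k (Ne.symm h0.1)).symm) hw0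
      · intro i hi
        rw [map_sub, map_smul, Finsupp.sub_apply, Finsupp.smul_apply, hrepr, smul_eq_mul, ← sub_mul]
        rcases Finset.mem_insert.mp hi with rfl | hi
        · rw [sub_self, zero_mul]
        · rw [hws i hi, mul_zero]
  obtain ⟨w, hw, hw0, hws⟩ := key (Finset.univ.erase 0) (by simp)
  have : w = e.repr w 0 • e 0 := by
    conv_lhs => rw [← e.sum_repr w]
    rw [Finset.sum_eq_single 0]
    · intro j _ hj; rw [hws j (by simp [hj]), zero_smul]
    · simp
  rw [this] at hw
  exact (W.smul_mem_iff hw0).mp hw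

/-- Construction of the chain of eigenvectors. -/
lemma exists_chain {d : ℕ} (hd : 1 ≤ d) (e : Module.Basis (Fin (d + 1)) F V)
    (A As : Module.End F V)
    (hA : IsIrredTridiag (LinearMap.toMatrix e e A))
    (θs : Fin (d + 1) → F) (hAs : ∀ i, As (e i) = θs i • e i)
    (hθs : ∀ i, i ≠ 0 → θs i ≠ θs 0) (θ : ℤ → F)
    (h1 : ∀ i j : ℤ, 0 ≤ i → i ≤ d → 0 ≤ j → j ≤ d → i ≠ j → θ i ≠ θ j)
    (v0 v1 : V) (hv0 : v0 ≠ 0) (hv1 : v1 ≠ 0)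
    (hAv0 : A v0 = θ 0 • v0) (hAv1 : A v1 = θ 1 • v1)
    (hAsv01 : ∃ t : F, As v0 - v1 = t • v0) (β γs γ ω ηs ρ : F)
    (h6 : ∀ i : ℤ, 1 ≤ i → i ≤ (d : ℤ) - 1 → θ (i - 1) - β * θ i + θ (i + 1) = γ)
    (hAW : ∀ w : V, As (As (A w)) - β • As (A (As w)) + A (As (As w))
      - γs • (A (As w) + As (A w)) - ρ • A w = γ • As (As w) + ω • As w + ηs • w) :
    ∀ n : ℕ, n + 1 ≤ d → ∃ v : ℕ → V, (∀ i ≤ n + 1, v i ≠ 0) ∧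
      (∀ i : ℕ, i ≤ n + 1 → A (v i) = θ i • v i) ∧
      ∀ i < n + 1, As (v i) - v (i + 1) ∈ Submodule.span F (v '' Set.Iic i) := by
  classical
  intro n
  induction n with
  | zero =>
    intro _
    refine ⟨fun n => if n = 0 then v0 else v1, ?_, ?_, ?_⟩
    · intro i _; dsimp only; split_ifs <;> assumption
    · intro i hi
      rcases (by omega : i = 0 ∨ i = 1) with rfl | rfl
      · simpa using hAv0
      · simpa using hAv1
    · intro i hi
      obtain rfl : i = 0 := by omega
      obtain ⟨t, ht⟩ := hAsv01
      simp only [zero_add, if_true, one_ne_zero, if_false, ht]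
      exact Submodule.smul_mem _ _ (Submodule.subset_span ⟨0, by simp, by simp⟩)
  | succ n ih =>
    intro hn
    obtain ⟨v, hne, heig, hAsv⟩ := ih (by omega)
    let U : ℕ → Submodule F V := fun k => Submodule.span F (v '' Set.Iic k)
    have hUmono : ∀ i j, i ≤ j → U i ≤ U j := fun i j hij =>
      Submodule.span_mono (Set.image_mono (Set.Iic_subset_Iic.mpr hij))
    have hvU : ∀ i j, i ≤ j → v i ∈ U j := fun i j hij => Submodule.subset_span ⟨i, hij, rfl⟩
    have hUA : ∀ k ≤ n + 1, ∀ u ∈ U k, A u ∈ U k := by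
      intro k hk u hu
      have : U k ≤ (U k).comap A := by
        rw [Submodule.span_le]
        rintro _ ⟨i, hi, rfl⟩
        have hi' : i ≤ k := hi
        change A (v i) ∈ U k
        rw [heig i (by omega)]
        exact Submodule.smul_mem _ _ (hvU i k hi')
      exact this hu
    have hUAs : ∀ k ≤ n, ∀ u ∈ U k, As u ∈ U (k + 1) := by
      intro k hk u hu
      have : U k ≤ (U (k + 1)).comap As := by
        rw [Submodule.span_le]
        rintro _ ⟨i, hi, rfl⟩
        have hi' : i ≤ k := hi
        change As (v i) ∈ U (k + 1)
        have h := hUmono i (k + 1) (by omega) (hAsv i (by omega))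
        have := Submodule.add_mem _ h (hvU (i + 1) (k + 1) (by omega))
        rwa [sub_add_cancel] at this
      exact this hu
    set y := As (v (n + 1)) with hy
    obtain ⟨u, hu, huv⟩ : ∃ u ∈ U n, As (v n) = v (n + 1) + u :=
      ⟨_, hAsv n (by omega), by abel⟩
    have hz : A y - θ ((n : ℤ) + 2) • y ∈ U (n + 1) := by
      have hw := hAW (v n)
      have e6 := h6 ((n : ℤ) + 1) (by omega) (by omega)
      rw [add_sub_cancel_right, show (n : ℤ) + 1 + 1 = n + 2 by ring] at e6
      have hn1 := heig (n + 1) le_rfl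
      push_cast at hn1
      rw [heig n (by omega)] at hw
      simp only [map_smul, huv, map_add, hn1, ← hy] at hw
      have m1 : As u ∈ U (n + 1) := hUAs n le_rfl u hu
      have m2 : A u ∈ U (n + 1) := hUmono n _ (by omega) (hUA n (by omega) u hu)
      have m3 : As (A u) ∈ U (n + 1) := hUAs n le_rfl _ (hUA n (by omega) u hu)
      have m4 : A (As u) ∈ U (n + 1) := hUA _ le_rfl _ m1
      have m5 : v n ∈ U (n + 1) := hvU _ _ (by omega)
      have m6 : v (n + 1) ∈ U (n + 1) := hvU _ _ le_rfl
      have m7 : u ∈ U (n + 1) := hUmono n _ (by omega) hu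
      have e : A y - θ ((n : ℤ) + 2) • y =
          (γ - θ n) • As u + β • As (A u) - A (As u) + γs • (θ (n + 1) • v (n + 1) + A u)
          + (γs * θ n) • (v (n + 1) + u) + (ρ * θ n + ηs) • v n + ω • (v (n + 1) + u) := by
        have e7 : θ ((n : ℤ) + 2) = γ - θ n + β * θ (n + 1) := by linear_combination e6
        rw [e7]
        rw [← sub_eq_zero] at hw ⊢
        rw [← hw]
        module
      rw [e]
      refine Submodule.add_mem _ (Submodule.add_mem _ (Submodule.add_mem _ (Submodule.add_mem _
        (Submodule.sub_mem _ (Submodule.add_mem _ ?_ ?_) ?_) ?_) ?_) ?_) ?_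
      · exact Submodule.smul_mem _ _ m1
      · exact Submodule.smul_mem _ _ m3
      · exact m4
      · exact Submodule.smul_mem _ _ (Submodule.add_mem _ (Submodule.smul_mem _ _ m6) m2)
      · exact Submodule.smul_mem _ _ (Submodule.add_mem _ m6 m7)
      · exact Submodule.smul_mem _ _ m5
      · exact Submodule.smul_mem _ _ (Submodule.add_mem _ m6 m7)
    have hsurj : ∀ z ∈ U (n + 1), ∃ x ∈ U (n + 1), A x - θ ((n : ℤ) + 2) • x = z := by
      intro z hz
      have : U (n + 1) ≤ (U (n + 1)).map (A - θ ((n : ℤ) + 2) • (1 : Module.End F V)) := by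
        rw [Submodule.span_le]
        rintro _ ⟨i, hi, rfl⟩
        have hi' : i ≤ n + 1 := hi
        have hne' : θ i - θ ((n : ℤ) + 2) ≠ 0 :=
          sub_ne_zero.mpr (h1 _ _ (by omega) (by omega) (by omega) (by omega) (by omega))
        refine ⟨(θ i - θ ((n : ℤ) + 2))⁻¹ • v i, Submodule.smul_mem _ _ (hvU i _ hi'), ?_⟩
        simp only [LinearMap.sub_apply, LinearMap.smul_apply, Module.End.one_apply, map_smul]
        rw [heig i hi', ← sub_smul, smul_smul, inv_mul_cancel₀ hne', one_smul]
      obtain ⟨x, hx, hxz⟩ := this hz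
      exact ⟨x, hx, by simpa using hxz⟩
    obtain ⟨x, hx, hxz⟩ := hsurj _ hz
    have hnew : A (y - x) = θ ((n : ℤ) + 2) • (y - x) := by
      rw [map_sub, smul_sub, sub_eq_sub_iff_sub_eq_sub]
      exact hxz.symm
    have hnew0 : y - x ≠ 0 := by
      intro h
      have hyx : y = x := sub_eq_zero.mp h
      have hUinv : ∀ w ∈ U (n + 1), As w ∈ U (n + 1) := by
        intro w hw
        have : U (n + 1) ≤ (U (n + 1)).comap As := by
          rw [Submodule.span_le]
          rintro _ ⟨i, hi, rfl⟩
          have hi' : i ≤ n + 1 := hi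
          change As (v i) ∈ U (n + 1)
          rcases Nat.lt_or_ge i (n + 1) with h | h
          · exact hUmono (i + 1) _ (by omega) (hUAs i (by omega) _ (hvU i i le_rfl))
          · obtain rfl : i = n + 1 := by omega
            rw [← hy, hyx]; exact hx
        exact this hw
      have htop := irred e A As hA θs hAs hθs (U (n + 1)) (hUA _ le_rfl) hUinv (v 0)
        (hvU 0 _ (by omega)) (hne 0 (by omega)) _ (heig 0 (by omega))
      have hfin : Module.finrank F V = d + 1 := by
        rw [Module.finrank_eq_card_basis e, Fintype.card_fin]
      have hle : Module.finrank F (U (n + 1)) ≤ n + 2 := by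
        have hU : U (n + 1) = Submodule.span F
            (((Finset.range (n + 2)).image v : Finset V) : Set V) := by
          simp only [U]
          congr 1
          ext z
          simp [Nat.lt_succ_iff]
        rw [hU]
        refine (finrank_span_finset_le_card _).trans (Finset.card_image_le.trans ?_)
        simp
      rw [htop, finrank_top, hfin] at hle
      omega
    have hup : ∀ i, i ≤ n + 1 → Function.update v (n + 2) (y - x) i = v i := fun i hi =>
      Function.update_of_ne (by omega) _ _
    have hupU : ∀ i, i ≤ n + 1 → (Function.update v (n + 2) (y - x)) '' Set.Iic i
        = v '' Set.Iic i := by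
      intro i hi
      apply Set.image_congr
      intro j hj
      have : j ≤ i := hj
      exact hup j (by omega)
    refine ⟨Function.update v (n + 2) (y - x), ?_, ?_, ?_⟩
    · intro i hi
      rcases Nat.lt_or_ge i (n + 2) with h | h
      · rw [hup i (by omega)]; exact hne i (by omega)
      · obtain rfl : i = n + 2 := by omega
        rwa [Function.update_self]
    · intro i hi
      rcases Nat.lt_or_ge i (n + 2) with h | h
      · rw [hup i (by omega)]; exact heig i (by omega)
      · obtain rfl : i = n + 2 := by omega
        rw [Function.update_self]; push_cast; exact hnew
    · intro i hi
      rw [hupU i (by omega), hup i (by omega)]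
      rcases Nat.lt_or_ge i (n + 1) with h | h
      · rw [hup (i + 1) (by omega)]; exact hAsv i (by omega)
      · obtain rfl : i = n + 1 := by omega
        rw [Function.update_self, ← hy, sub_sub_cancel]
        exact hx

/-- **First main theorem** (Theorem 3.1 of the paper).
Given a system of mutually orthogonal idempotents `Es`, a suitably tridiagonal `A`,
`As = Σ θs i • Es i`, and conditions (i)–(vi), the pair `A, As` is a Leonard pair on `V`,
`A` is multiplicity-free with eigenvalues `θ 0, …, θ d`, `As` is multiplicity-free with
eigenvalues `θs 0, …, θs d`, and `(A; E; As; Es)` is a Leonard system, where `E i` is the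
primitive idempotent of `A` for `θ i`. -/
theorem first_main_theorem
    {F : Type*} [Field F] {V : Type*} [AddCommGroup V] [Module F V]
    (d : ℕ) (hd : 1 ≤ d) (hdim : Module.finrank F V = d + 1)
    (Es : Fin (d + 1) → Module.End F V) (hEs : MOISys d Es)
    (A : Module.End F V)
    (hAfar : ∀ i j : Fin (d + 1), ((i : ℕ) + 1 < (j : ℕ) ∨ (j : ℕ) + 1 < (i : ℕ)) →
      Es i * A * Es j = 0)
    (hAnear : ∀ i j : Fin (d + 1), ((i : ℕ) + 1 = (j : ℕ) ∨ (j : ℕ) + 1 = (i : ℕ)) →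
      Es i * A * Es j ≠ 0)
    (θs : ℤ → F) (As : Module.End F V)
    (hAs : As = ∑ i : Fin (d + 1), θs ((i : ℕ) : ℤ) • Es i)
    (θ : ℤ → F) (a : ℕ → F)
    (ha : ∀ i : Fin (d + 1), a i = LinearMap.trace F V (Es i * A))
    -- (i)
    (h1 : ∀ i j : ℤ, 0 ≤ i → i ≤ d → 0 ≤ j → j ≤ d → i ≠ j → θ i ≠ θ j)
    -- (ii)
    (h2 : ∀ i : ℤ, 1 ≤ i → i ≤ d → θs i ≠ θs 0)
    -- (iii), with `θs (-1)` and `θs (d+1)` defined so that the recurrence holds at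
    -- `i = 0` and `i = d` as well
    (β γs : F)
    (h3 : ∀ i : ℤ, 0 ≤ i → i ≤ d → γs = θs (i - 1) - β * θs i + θs (i + 1))
    -- (iv)
    (v0 v1 : V) (hv0 : v0 ≠ 0) (hv1 : v1 ≠ 0)
    (hAv0 : A v0 = θ 0 • v0) (hAv1 : A v1 = θ 1 • v1)
    (hAsv01 : ∃ t : F, As v0 - v1 = t • v0)
    -- (v)
    (γ ω ηs : F)
    (h5 : ∀ i : ℕ, i ≤ d →
      a i * ((θs i - θs ((i : ℤ) - 1)) * (θs i - θs ((i : ℤ) + 1)))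
        = γ * θs i ^ 2 + ω * θs i + ηs)
    -- (vi)
    (h6 : ∀ i : ℤ, 1 ≤ i → i ≤ (d : ℤ) - 1 → θ (i - 1) - β * θ i + θ (i + 1) = γ) :
    IsLeonardPair d A As ∧
    ∃ E : Fin (d + 1) → Module.End F V,
      IdempSysOf d A (fun i : Fin (d + 1) => θ ((i : ℕ) : ℤ)) E ∧
      IdempSysOf d As (fun i : Fin (d + 1) => θs ((i : ℕ) : ℤ)) Es ∧
      IsLeonardSystem d A E As Es := by
  classical
  obtain ⟨e, rfl⟩ := exists_basis_of_MOISys hdim Es hEs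
  have hT : IsIrredTridiag (LinearMap.toMatrix e e A) :=
    ⟨fun i j h => (bproj_triple e A i j).mp (hAfar i j h),
      fun i j h h' => hAnear i j h ((bproj_triple e A i j).mpr h')⟩
  have hAse : ∀ i, As (e i) = θs ((i : ℕ) : ℤ) • e i := by
    intro i
    rw [hAs, LinearMap.sum_apply, Finset.sum_eq_single i]
    · simp [bproj_apply]
    · intro j _ hj
      simp [bproj_apply, Finsupp.single_apply, Ne.symm hj]
    · simp
  have ha' : ∀ i : Fin (d + 1), a i = LinearMap.toMatrix e e A i i := by
    intro i
    rw [ha i, LinearMap.trace_eq_matrix_trace F e, Matrix.trace, Finset.sum_eq_single i]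
    · simp [Matrix.diag, LinearMap.toMatrix_apply, bproj_apply, Module.End.mul_apply]
    · intro j _ hj
      simp [Matrix.diag, LinearMap.toMatrix_apply, bproj_apply, Module.End.mul_apply,
        Finsupp.single_apply, Ne.symm hj]
    · simp
  obtain ⟨ρ, hAW⟩ := AW_rel e A As hT.1 θs hAse a ha' β γs h3 γ ω ηs h5
  have hθs0 : ∀ i : Fin (d + 1), i ≠ 0 →
      θs ((i : ℕ) : ℤ) ≠ θs (((0 : Fin (d + 1)) : ℕ) : ℤ) := by
    intro i hi
    have hi0 : (i : ℕ) ≠ 0 := fun h => hi (Fin.ext h)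
    have hi2 := i.2
    have := h2 ((i : ℕ) : ℤ) (by omega) (by omega)
    simpa using this
  obtain ⟨v, hne, heig, hAsv⟩ := exists_chain hd e A As hT (fun i => θs ((i : ℕ) : ℤ)) hAse hθs0
    θ h1 v0 v1 hv0 hv1 hAv0 hAv1 hAsv01 β γs γ ω ηs ρ h6 hAW (d - 1) (by omega)
  rw [Nat.sub_add_cancel hd] at hne heig hAsv
  have hθinj : Function.Injective (fun i : Fin (d + 1) => θ ((i : ℕ) : ℤ)) := by
    intro i j hij
    by_contra hne
    have hne' : (i : ℕ) ≠ j := fun h => hne (Fin.ext h)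
    have hi := i.2
    have hj := j.2
    exact h1 i j (by omega) (by omega) (by omega) (by omega) (by omega) hij
  have hli : LinearIndependent F (fun i : Fin (d + 1) => v i) := by
    apply Module.End.eigenvectors_linearIndependent' A (fun i : Fin (d + 1) => θ ((i : ℕ) : ℤ)) hθinj
    intro i
    have hi := i.2
    exact ⟨Module.End.mem_eigenspace_iff.mpr (heig i (by omega)), hne i (by omega)⟩
  let b := basisOfLinearIndependentOfCardEqFinrank hli (by simp [hdim])
  have hb : ∀ i, b i = v i := fun i => by simp [b]
  have hAb : ∀ i, A (b i) = θ ((i : ℕ) : ℤ) • b i := by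
    intro i
    have hi := i.2
    rw [hb]; exact heig i (by omega)
  set M := LinearMap.toMatrix b b As with hM
  -- coordinates of the spans
  have hspan : ∀ (k : ℕ) (i : Fin (d + 1)), k < (i : ℕ) →
      ∀ w ∈ Submodule.span F (v '' Set.Iic k), b.repr w i = 0 := by
    intro k i hki w hw
    have : Submodule.span F (v '' Set.Iic k) ≤ LinearMap.ker (b.coord i) := by
      rw [Submodule.span_le]
      rintro _ ⟨j, hj, rfl⟩
      have hj' : j ≤ k := hj
      have hi := i.2
      have : v j = b ⟨j, by omega⟩ := (hb ⟨j, by omega⟩).symm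
      change b.coord i (v j) = 0
      rw [this, Module.Basis.coord_apply, b.repr_self, Finsupp.single_apply, if_neg]
      intro h
      have := congrArg Fin.val h
      simp only at this
      omega
    exact this hw
  have hlow : ∀ i j : Fin (d + 1), (j : ℕ) + 1 < i → M i j = 0 := by
    intro i j hij
    have hi := i.2
    rw [hM, LinearMap.toMatrix_apply, hb j]
    have h := hspan j i (by omega) _ (hAsv j (by omega))
    have h2 := hspan (j + 1) i (by omega) (v (j + 1)) (Submodule.subset_span ⟨j + 1, by simp, rfl⟩)
    rwa [map_sub, Finsupp.sub_apply, h2, sub_zero] at h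
  have hsub : ∀ i j : Fin (d + 1), (j : ℕ) + 1 = i → M i j ≠ 0 := by
    intro i j hij
    have hi := i.2
    rw [hM, LinearMap.toMatrix_apply, hb j]
    have h := hspan j i (by omega) _ (hAsv j (by omega))
    rw [hij, ← hb i, map_sub, Finsupp.sub_apply, b.repr_self, Finsupp.single_eq_same,
      sub_eq_zero] at h
    rw [h]; exact one_ne_zero
  obtain ⟨B, hBA, hBAs, hBnd⟩ := exists_form e A As hT (fun i => θs ((i : ℕ) : ℤ)) hAse
  have horth : ∀ i j, i ≠ j → B (b i) (b j) = 0 := by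
    intro i j hij
    have h := hBA (b i) (b j)
    rw [hAb, hAb, map_smul, LinearMap.smul_apply, map_smul, ← sub_eq_zero, ← sub_smul] at h
    exact (smul_eq_zero.mp h).resolve_left (sub_ne_zero.mpr (fun h => hij (hθinj h)))
  have hdiag : ∀ i, B (b i) (b i) ≠ 0 := by
    intro i h
    apply b.ne_zero i
    apply hBnd
    have : B (b i) = 0 := by
      apply b.ext
      intro j
      by_cases hij : i = j
      · subst hij; simpa using h
      · simpa using horth i j hij
    intro w; rw [this]; rfl
  have hMs : ∀ i j, M j i * B (b j) (b j) = M i j * B (b i) (b i) := by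
    intro i j
    have h := hBAs (b i) (b j)
    rw [apply_basis b As i, apply_basis b As j, map_sum, map_sum, LinearMap.sum_apply,
      Finset.sum_eq_single j, Finset.sum_eq_single i] at h
    · simpa using h
    · intro k _ hk; rw [map_smul, horth i k (Ne.symm hk), smul_zero]
    · simp
    · intro k _ hk; rw [map_smul, LinearMap.smul_apply, horth k j hk, smul_zero]
    · simp
  have hMiff : ∀ i j, M i j = 0 → M j i = 0 := by
    intro i j h
    have h' := hMs i j
    rw [h, zero_mul] at h'
    exact (mul_eq_zero.mp h').resolve_right (hdiag j)
  have hMtri : IsIrredTridiag M := by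
    refine ⟨?_, ?_⟩
    · rintro i j (h | h)
      · exact hMiff _ _ (hlow j i h)
      · exact hlow i j h
    · rintro i j (h | h)
      · exact fun h' => hsub j i h (hMiff _ _ h')
      · exact hsub i j h
  have hθsinj : Function.Injective (fun i : Fin (d + 1) => θs ((i : ℕ) : ℤ)) := by
    intro i j hij
    by_contra hne
    simp only at hij
    let u := b.repr (e j) 0 • e i - b.repr (e i) 0 • e j
    have hu : u = 0 := by
      apply tri_eig b As hMtri u (θs ((i : ℕ) : ℤ))
      · simp only [u, map_sub, map_smul, hAse, ← hij]
        module
      · simp only [u, map_sub, map_smul, Finsupp.sub_apply, Finsupp.smul_apply, smul_eq_mul]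
        ring
    have hi0 : b.repr (e j) 0 = 0 := by
      have := congrArg (fun w => e.repr w i) hu
      simpa [u, Finsupp.single_apply, Ne.symm hne] using this
    exact e.ne_zero j (tri_eig b As hMtri (e j) _ (hAse j) hi0)
  have hsysA := bproj_sys b A _ hθinj hAb
  have hsysAs := bproj_sys e As _ hθsinj hAse
  refine ⟨⟨⟨e, hT, ?_⟩, ⟨b, hMtri, ?_⟩⟩, bproj b, hsysA, hsysAs, ⟨_, hsysA⟩, ⟨_, hsysAs⟩,
    hAfar, hAnear, ?_, ?_⟩
  · intro i j hij
    rw [LinearMap.toMatrix_apply, hAse]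
    simp [Finsupp.single_apply, Ne.symm hij]
  · intro i j hij
    rw [LinearMap.toMatrix_apply, hAb]
    simp [Finsupp.single_apply, Ne.symm hij]
  · exact fun i j h => (bproj_triple b As i j).mpr (hMtri.1 i j h)
  · exact fun i j h h' => hMtri.2 i j h ((bproj_triple b As i j).mp h')

end LeonardPaper
end

section
/- Let 𝔽 be a field and d ≥ 1 an integer. Suppose there exist scalars {θ_i}_{i=0}^{d}, {θ*_i}_{i=0}^{d}, {a_i}_{i=0}^{d}, {b_i}_{i=0}^{d−1}, {c_i}_{i=1}^{d} in 𝔽 such that: (i) θ_i ≠ θ_j whenever i ≠ j (0 ≤ i,j ≤ d); (ii) θ*_i ≠ θ*_0 for 1 ≤ i ≤ d; (iii) there exist β, γ* ∈ 𝔽 such that γ* = θ*_{i−1} − βθ*_i + θ*_{i+1} for 1 ≤ i ≤ d−1, with θ*_{−1}, θ*_{d+1} ∈ 𝔽 defined so that this equation also holds at i = 0 and i = d; (iv) b_{i−1}c_i ≠ 0 for 1 ≤ i ≤ d; (v) c_i + a_i + b_i = θ_0 for 0 ≤ i ≤ d, where b_d = c_0 = 0; (vi) there exists a*_0 ∈ 𝔽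 such that c_i(θ*_{i−1} − θ*_i) − b_i(θ*_i − θ*_{i+1}) = (θ_1 − θ_0)(θ*_i − a*_0) for 0 ≤ i ≤ d; (vii) there exists θ_{−1} ∈ 𝔽 such that the expression c_i(θ*_{i−1} − θ*_{i+1}) − b_{i−1}(θ*_{i−2} − θ*_i) − (θ_0 − θ_{−1})(θ*_{i−1} + θ*_i) is independent of i for 1 ≤ i ≤ d; (viii) with γ := θ_{−1} − βθ_0 + θ_1, one has θ_{i−1} − βθ_i + θ_{i+1} = γ for 1 ≤ i ≤ d−1. Then the (d+1)×(d+1) irreducible tridiagonal matrix A over 𝔽 with diagonal entries a_0,…,a_d, superdiagonal entries b_0,…,b_{d−1}, and subdiagonal entries c_1,…,c_d, together with the diagonal matrix A* = diag(θ*_0,…,θ*_d), form a Leonard pair on 𝔽^{d+1}; moreover, A is multiplicity-free with eigenvalues θ_0,…,θ_d, A* is multiplicity-free with eigenvalues θ*_0,…,θ*_d, and (A; {E_i}; A*; {E*_i}) is a Leonard system, where E_i is the primitive idempotent of A for θ_i and E*_i is the primitive idempotent of A* for θ*_i. -/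
namespace LeonardPaper

variable {F : Type*} [Field F] {V : Type*} [AddCommGroup V] [Module F V]

/-- Conditions (i)–(viii) of the second main theorem (Theorem 4.1 of the paper).
Here `θ` is the (extended) eigenvalue sequence (indices `-1, 0, …, d`), `θs` the
(extended) dual eigenvalue sequence (indices `-1, 0, …, d+1`), `a`, `b`, `c` the
candidate intersection numbers, and `Ω` the common value in condition (vii). -/
def Thm2Conds (d : ℕ) (θ θs : ℤ → F) (a b c : ℕ → F) (β γ γs astar0 Ω : F) : Prop :=
  -- (i)
  (∀ i j : ℤ, 0 ≤ i → i ≤ d → 0 ≤ j → j ≤ d → i ≠ j → θ i ≠ θ j) ∧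
  -- (ii)
  (∀ i : ℤ, 1 ≤ i → i ≤ d → θs i ≠ θs 0) ∧
  -- (iii), extended to i = 0 and i = d via θs (-1) and θs (d+1)
  (∀ i : ℤ, 0 ≤ i → i ≤ d → γs = θs (i - 1) - β * θs i + θs (i + 1)) ∧
  -- (iv)
  (∀ i : ℕ, 1 ≤ i → i ≤ d → b (i - 1) * c i ≠ 0) ∧
  -- (v)
  (b d = 0) ∧ (c 0 = 0) ∧
  (∀ i : ℕ, i ≤ d → c i + a i + b i = θ 0) ∧
  -- (vi)
  (∀ i : ℕ, i ≤ d →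
    c i * (θs ((i : ℤ) - 1) - θs i) - b i * (θs i - θs ((i : ℤ) + 1))
      = (θ 1 - θ 0) * (θs i - astar0)) ∧
  -- (vii)
  (∀ i : ℕ, 1 ≤ i → i ≤ d →
    c i * (θs ((i : ℤ) - 1) - θs ((i : ℤ) + 1)) - b (i - 1) * (θs ((i : ℤ) - 2) - θs i)
      - (θ 0 - θ (-1)) * (θs ((i : ℤ) - 1) + θs i) = Ω) ∧
  -- (viii)
  (γ = θ (-1) - β * θ 0 + θ 1) ∧
  (∀ i : ℤ, 1 ≤ i → i ≤ (d : ℤ) - 1 → θ (i - 1) - β * θ i + θ (i + 1) = γ)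

open Polynomial in
/-- multiplication by `X` raises the degree bound by one. -/
lemma X_mul_mem {n : ℕ} {p : F[X]} (hp : p ∈ degreeLT F n) : X * p ∈ degreeLT F (n + 1) := by
  rw [mem_degreeLT] at *
  by_cases h0 : p = 0
  · subst h0; simp only [mul_zero, degree_zero]; exact WithBot.bot_lt_coe _
  rw [degree_eq_natDegree h0] at hp
  rw [degree_mul, degree_X, degree_eq_natDegree h0]
  norm_cast at *
  omega

open Polynomial in
lemma X_pow_mem {n m : ℕ} (h : n < m) : (X : F[X]) ^ n ∈ degreeLT F m := by
  rw [mem_degreeLT, degree_X_pow]; exact_mod_cast h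

lemma rho_const {d : ℕ} {θs : ℤ → F} {β γs : F}
    (h3 : ∀ i : ℤ, 0 ≤ i → i ≤ d → γs = θs (i - 1) - β * θs i + θs (i + 1)) :
    ∃ ρ : F, ∀ i : ℕ, i ≤ d + 1 → θs ((i : ℤ) - 1) ^ 2 - β * θs ((i : ℤ) - 1) * θs i + θs i ^ 2
      - γs * (θs ((i : ℤ) - 1) + θs i) = ρ := by
  refine ⟨θs (-1) ^ 2 - β * θs (-1) * θs 0 + θs 0 ^ 2 - γs * (θs (-1) + θs 0), fun i => ?_⟩
  induction i with
  | zero => intro _; simp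
  | succ i ih =>
    intro hi
    rw [← ih (by omega)]
    have := h3 i (by omega) (by omega)
    push_cast
    rw [add_sub_cancel_right]
    have e : θs ((i : ℤ) + 1) = γs - θs ((i : ℤ) - 1) + β * θs i := by rw [this]; ring
    rw [e]; ring

lemma diag_rel {d : ℕ} {θ θs : ℤ → F} {a b c : ℕ → F} {β γ γs astar0 Ω : F}
    (h : Thm2Conds d θ θs a b c β γ γs astar0 Ω) :
    ∃ κ μ : F, ∀ i : ℕ, i ≤ d →
      (c i + b i) * ((θs ((i : ℤ) - 1) - θs i) * (θs i - θs ((i : ℤ) + 1))) =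
        (θ (-1) + θ 1 - 2 * θ 0) * θs i ^ 2 + κ * θs i + μ := by
  obtain ⟨h1, h2, h3, h4, hb, hc, h5, h6, h7, h8, h9⟩ := h
  refine ⟨-(Ω + 2 * (θ 1 - θ 0) * astar0),
    (c 0 + b 0) * ((θs (-1) - θs 0) * (θs 0 - θs 1)) - ((θ (-1) + θ 1 - 2 * θ 0) * θs 0 ^ 2
      + -(Ω + 2 * (θ 1 - θ 0) * astar0) * θs 0), fun i => ?_⟩
  induction i with
  | zero => intro _; simp
  | succ i ih =>
    intro hi
    have ih := ih (by omega)
    have e7 := h7 (i + 1) (by omega) hi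
    have e6 := h6 (i + 1) hi
    have e6' := h6 i (by omega)
    push_cast at *
    simp only [add_sub_cancel_right] at *
    have t : ((i : ℤ) + 1 - 2) = i - 1 := by ring
    rw [t] at e7
    linear_combination ih + (θs i - θs (i + 1)) * e7 - (θs i - θs (i + 1)) * e6
      - (θs i - θs (i + 1)) * e6'

open Polynomial in
/-- The key triangularity: `A` applied to the `n`-th power vector. -/
lemma key_scalar {d : ℕ} {θ θs : ℤ → F} {a b c : ℕ → F} {β γ γs astar0 Ω : F}
    (h : Thm2Conds d θ θs a b c β γ γs astar0 Ω) (n : ℕ) : n ≤ d →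
    ∃ q ∈ degreeLT F n, ∀ i : ℕ, i ≤ d →
      c i * θs ((i : ℤ) - 1) ^ n + a i * θs i ^ n + b i * θs ((i : ℤ) + 1) ^ n
        = θ n * θs i ^ n + q.eval (θs i) := by
  obtain ⟨κ, μ, hD⟩ := diag_rel h
  obtain ⟨h1, h2, h3, h4, hb, hc, h5, h6, h7, h8, h9⟩ := h
  obtain ⟨ρ, hρ⟩ := rho_const h3
  induction n using Nat.twoStepInduction with
  | zero =>
    intro _
    refine ⟨0, Submodule.zero_mem _, fun i hi => ?_⟩
    simp [h5 i hi]
  | one =>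
    intro hd
    refine ⟨C ((θ 0 - θ 1) * astar0), ?_, fun i hi => ?_⟩
    · rw [mem_degreeLT]; exact lt_of_le_of_lt degree_C_le (by norm_num)
    · have := h6 i hi
      have := h5 i hi
      simp only [pow_one, eval_C, Nat.cast_one]
      linear_combination h6 i hi + θs i * h5 i hi
  | more n ih0 ih1 =>
    intro hd
    obtain ⟨q0, hq0, e0⟩ := ih0 (by omega)
    obtain ⟨q1, hq1, e1⟩ := ih1 (by omega)
    refine ⟨β • (X * q1) - X * (X * q0) + γs • (θ n • X ^ (n + 1) + X * q0 +
      (θ (n + 1) • X ^ (n + 1) + q1)) + ρ • (θ n • X ^ n + q0) +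
      ((κ - 2 * γs * θ 0) • X ^ (n + 1) + (μ - ρ * θ 0) • X ^ n), ?_, fun i hi => ?_⟩
    · have m1 : ∀ {k l : ℕ} {p : F[X]}, k ≤ l → p ∈ degreeLT F k → p ∈ degreeLT F l :=
        fun hkl hp => degreeLT_mono hkl hp
      refine add_mem (add_mem (add_mem (sub_mem ?_ ?_) ?_) ?_) ?_
      · exact Submodule.smul_mem _ _ (X_mul_mem hq1)
      · exact X_mul_mem (X_mul_mem hq0)
      · refine Submodule.smul_mem _ _ (add_mem (add_mem ?_ ?_) (add_mem ?_ ?_))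
        · exact Submodule.smul_mem _ _ (X_pow_mem (by omega))
        · exact m1 (by omega) (X_mul_mem hq0)
        · exact Submodule.smul_mem _ _ (X_pow_mem (by omega))
        · exact m1 (by omega) hq1
      · refine Submodule.smul_mem _ _ (add_mem ?_ ?_)
        · exact Submodule.smul_mem _ _ (X_pow_mem (by omega))
        · exact m1 (by omega) hq0
      · exact add_mem (Submodule.smul_mem _ _ (X_pow_mem (by omega)))
          (Submodule.smul_mem _ _ (X_pow_mem (by omega)))
    · have E0 := e0 i hi
      have E1 := e1 i hi
      have D := hD i hi
      have r1 := hρ i (by omega)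
      have r2 := hρ (i + 1) (by omega)
      have t3 := h3 i (by omega) (by omega)
      have t9 := h9 (n + 1) (by omega) (by omega)
      have t5 := h5 i hi
      have hb' : (n : ℤ) + 1 + 1 = n + 2 := by ring
      push_cast at *
      simp only [add_sub_cancel_right, hb'] at *
      simp only [eval_add, eval_sub, eval_smul, eval_mul, eval_X, eval_pow, smul_eq_mul]
      set x := θs ((i : ℤ) - 1)
      set y := θs (i : ℤ)
      set z := θs ((i : ℤ) + 1)
      have hQ : (x - y) * (y - z) = -((2 - β) * y ^ 2 - 2 * γs * y - ρ) := by
        have : z = γs - x + β * y := by rw [t3]; ring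
        rw [this]
        linear_combination (1 : F) * r1
      have hA : a i * ((2 - β) * y ^ 2 - 2 * γs * y - ρ) =
          γ * y ^ 2 + (κ - 2 * γs * θ 0) * y + (μ - ρ * θ 0) := by
        have ha : a i = θ 0 - (c i + b i) := by rw [← t5]; ring
        rw [hQ] at D
        rw [ha, h8]
        linear_combination D
      have hθ : θ ((n : ℤ) + 2) = γ - θ n + β * θ (n + 1) := by rw [← t9]; ring
      rw [hθ]
      linear_combination (β * y + γs) * E1 + (-y ^ 2 + γs * y + ρ) * E0
        + c i * x ^ n * r1 + b i * z ^ n * r2 + y ^ n * hA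

/-- The rank one operators attached to a basis. -/
noncomputable def Eb {d : ℕ} (bas : Module.Basis (Fin (d + 1)) F V) (i : Fin (d + 1)) : Module.End F V :=
  (bas.coord i).smulRight (bas i)

lemma Eb_mul {d : ℕ} (bas : Module.Basis (Fin (d + 1)) F V) (T : Module.End F V)
    (i j : Fin (d + 1)) :
    Eb bas i * T * Eb bas j =
      (LinearMap.toMatrix bas bas T i j) • (bas.coord j).smulRight (bas i) := by
  ext x
  simp [Eb, LinearMap.toMatrix_apply, smul_smul, mul_comm]

lemma Eb_mul_eq_zero {d : ℕ} (bas : Module.Basis (Fin (d + 1)) F V) (T : Module.End F V)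
    (i j : Fin (d + 1)) :
    Eb bas i * T * Eb bas j = 0 ↔ LinearMap.toMatrix bas bas T i j = 0 := by
  rw [Eb_mul]
  constructor
  · intro h
    have := congrArg (fun f => bas.repr (f (bas j)) i) h
    simpa using this
  · intro h; rw [h, zero_smul]

lemma Eb_idemp {d : ℕ} (bas : Module.Basis (Fin (d + 1)) F V) (A : Module.End F V)
    (θ : Fin (d + 1) → F) (hθ : Function.Injective θ) (hA : ∀ i, A (bas i) = θ i • bas i) :
    IdempSysOf d A θ (Eb bas) := by
  refine ⟨⟨fun i j => ?_, fun i => ?_⟩, ?_, hθ, fun i => ?_⟩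
  · have := Eb_mul bas 1 i j
    rw [mul_one] at this
    rw [this]
    split_ifs with hij
    · subst hij; ext x; simp [Eb]
    · simp [LinearMap.toMatrix_one, Matrix.one_apply, hij]
  · have : LinearMap.range (Eb bas i) = F ∙ bas i := by
      apply le_antisymm
      · rintro _ ⟨x, rfl⟩
        exact Submodule.mem_span_singleton.2 ⟨bas.coord i x, rfl⟩
      · rw [Submodule.span_singleton_le_iff_mem]
        exact ⟨bas i, by simp [Eb]⟩
    rw [this, finrank_span_singleton (bas.ne_zero i)]
  · ext x
    simp only [LinearMap.sum_apply, Eb, LinearMap.smulRight_apply, Module.Basis.coord_apply]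
    exact bas.sum_repr x
  · ext x
    simp [Eb, hA, smul_smul, mul_comm]

/-- Evaluation of polynomials at the dual eigenvalues. -/
noncomputable def ev (d : ℕ) (θs : ℤ → F) : Polynomial F →ₗ[F] (Fin (d + 1) → F) :=
  LinearMap.pi fun i => Polynomial.leval (θs ((i : ℕ) : ℤ))

lemma ev_apply (d : ℕ) (θs : ℤ → F) (p : Polynomial F) (i : Fin (d + 1)) :
    ev d θs p i = p.eval (θs ((i : ℕ) : ℤ)) := rfl

/-- Vectors given by polynomials of degree less than `n`. -/
noncomputable def PP (d : ℕ) (θs : ℤ → F) (n : ℕ) : Submodule F (Fin (d + 1) → F) :=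
  (Polynomial.degreeLT F n).map (ev d θs)

/-- power vectors. -/
noncomputable def wv (d : ℕ) (θs : ℤ → F) (n : ℕ) : Fin (d + 1) → F :=
  ev d θs (Polynomial.X ^ n)

lemma PP_mono (d : ℕ) (θs : ℤ → F) {n m : ℕ} (h : n ≤ m) : PP d θs n ≤ PP d θs m :=
  Submodule.map_mono (Polynomial.degreeLT_mono h)

lemma PP_zero (d : ℕ) (θs : ℤ → F) {x} (h : x ∈ PP d θs 0) : x = 0 := by
  obtain ⟨p, hp, rfl⟩ := h
  have hp : p ∈ Polynomial.degreeLT F 0 := hp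
  rw [Polynomial.mem_degreeLT] at hp
  have : p = 0 := by
    by_contra h0
    rw [Polynomial.degree_eq_natDegree h0] at hp
    norm_cast at hp
  simp [this]

lemma wv_mem (d : ℕ) (θs : ℤ → F) {n m : ℕ} (h : n < m) : wv d θs n ∈ PP d θs m :=
  Submodule.mem_map_of_mem (X_pow_mem h)

open Polynomial in
lemma PP_succ (d : ℕ) (θs : ℤ → F) {n : ℕ} {x} (h : x ∈ PP d θs (n + 1)) :
    ∃ t : F, x - t • wv d θs n ∈ PP d θs n := by
  obtain ⟨p, hp, rfl⟩ := h
  have hp : p ∈ degreeLT F (n + 1) := hp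
  refine ⟨p.coeff n, ?_⟩
  rw [wv, ← map_smul, ← map_sub]
  apply Submodule.mem_map_of_mem
  rw [mem_degreeLT, degree_lt_iff_coeff_zero] at *
  intro m hm
  rcases hm.eq_or_lt with rfl | hm
  · simp
  · simp [hp m (by omega), coeff_X_pow, hm.ne']

/-- diagonal operator -/
lemma As_ev (d : ℕ) (θs : ℤ → F) (p : Polynomial F) :
    Matrix.toLin' (Matrix.diagonal fun i : Fin (d + 1) => θs ((i : ℕ) : ℤ)) (ev d θs p)
      = ev d θs (Polynomial.X * p) := by
  ext i
  simp [ev_apply, Matrix.mulVec_diagonal]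

lemma As_PP (d : ℕ) (θs : ℤ → F) {n : ℕ} {x} (h : x ∈ PP d θs n) :
    Matrix.toLin' (Matrix.diagonal fun i : Fin (d + 1) => θs ((i : ℕ) : ℤ)) x
      ∈ PP d θs (n + 1) := by
  obtain ⟨p, hp, rfl⟩ := h
  rw [As_ev]
  exact Submodule.mem_map_of_mem (X_mul_mem hp)

lemma As_wv (d : ℕ) (θs : ℤ → F) (n : ℕ) :
    Matrix.toLin' (Matrix.diagonal fun i : Fin (d + 1) => θs ((i : ℕ) : ℤ)) (wv d θs n)
      = wv d θs (n + 1) := by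
  rw [wv, As_ev, wv, pow_succ']

lemma tri_row {d : ℕ} {a b c : ℕ → F} (hb : b d = 0) (hc : c 0 = 0) (g : ℤ → F)
    (i : Fin (d + 1)) :
    Matrix.toLin' (triMat d a b c) (fun j : Fin (d + 1) => g ((j : ℕ) : ℤ)) i
      = c i * g (((i : ℕ) : ℤ) - 1) + a i * g ((i : ℕ) : ℤ) + b i * g (((i : ℕ) : ℤ) + 1) := by
  obtain ⟨i, hi⟩ := i
  simp only [Matrix.toLin'_apply, Matrix.mulVec, dotProduct, triMat, Matrix.of_apply]
  rw [Fin.sum_univ_eq_sum_range (fun j : ℕ => (if i = j then a i else if i + 1 = j then b i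
    else if j + 1 = i then c i else 0) * g (j : ℤ)) (d + 1)]
  have : ∀ j ∈ Finset.range (d + 1), (if i = j then a i else if i + 1 = j then b i
    else if j + 1 = i then c i else 0) * g (j : ℤ) =
      (if j = i then a i * g i else 0) + (if j = i + 1 then b i * g (i + 1) else 0)
      + (if j + 1 = i then c i * g (i - 1) else 0) := by
    intro j _
    rcases eq_or_ne i j with rfl | h1
    · simp
    rcases eq_or_ne (i + 1) j with rfl | h2
    · simp [show ¬ (i + 1 + 1 = i) by omega]
    rcases eq_or_ne (j + 1) i with rfl | h3
    · simp [show ¬ (j + 1 + 1 = j) by omega, show ¬ (j = j + 1 + 1) by omega]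
    simp [h1, h2, h3, h1.symm, h2.symm]
  rw [Finset.sum_congr rfl this, Finset.sum_add_distrib, Finset.sum_add_distrib]
  have s1 : ∑ j ∈ Finset.range (d + 1), (if j = i then a i * g i else 0) = a i * g i := by
    rw [Finset.sum_ite_eq' (Finset.range (d + 1)) i (fun _ => a i * g i)]; simp [hi]
  have s2 : ∑ j ∈ Finset.range (d + 1), (if j = i + 1 then b i * g (i + 1) else 0)
      = b i * g (i + 1) := by
    rw [Finset.sum_ite_eq' (Finset.range (d + 1)) (i + 1) (fun _ => b i * g (i + 1))]
    split_ifs with h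
    · rfl
    · have : i = d := by simp at h; omega
      subst this; simp [hb]
  have s3 : ∑ j ∈ Finset.range (d + 1), (if j + 1 = i then c i * g (i - 1) else 0)
      = c i * g (i - 1) := by
    rcases i with _ | i
    · simp [hc]
    · simp only [add_left_inj]
      rw [Finset.sum_ite_eq' (Finset.range (d + 1)) i (fun _ => c (i + 1) * g (_ - 1))]
      rw [if_pos (by simp; omega)]
  rw [s1, s2, s3]; ring

lemma key_vec {d : ℕ} {θ θs : ℤ → F} {a b c : ℕ → F} {β γ γs astar0 Ω : F}
    (h : Thm2Conds d θ θs a b c β γ γs astar0 Ω) (n : ℕ) (hn : n ≤ d) :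
    Matrix.toLin' (triMat d a b c) (wv d θs n) - θ n • wv d θs n ∈ PP d θs n := by
  obtain ⟨q, hq, e⟩ := key_scalar h n hn
  obtain ⟨h1, h2, h3, h4, hb, hc, h5, h6, h7, h8, h9⟩ := h
  refine ⟨q, hq, ?_⟩
  ext i
  have hw : wv d θs n = fun j : Fin (d + 1) => (fun k => θs k ^ n) ((j : ℕ) : ℤ) := by
    ext j; simp [wv, ev_apply]
  have := e i (by omega)
  rw [Pi.sub_apply, hw, tri_row hb hc (fun k => θs k ^ n), this]
  simp [ev_apply]

lemma A_PP {d : ℕ} {θ θs : ℤ → F} {a b c : ℕ → F} {β γ γs astar0 Ω : F}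
    (h : Thm2Conds d θ θs a b c β γ γs astar0 Ω) (n : ℕ) (hn : n ≤ d + 1) :
    ∀ x ∈ PP d θs n, Matrix.toLin' (triMat d a b c) x ∈ PP d θs n := by
  induction n with
  | zero => intro x hx; rw [PP_zero d θs hx, map_zero]; exact zero_mem _
  | succ n ih =>
    intro x hx
    obtain ⟨t, ht⟩ := PP_succ d θs hx
    have k := key_vec h n (by omega)
    have i1 := ih (by omega) _ ht
    have := add_mem (PP_mono d θs n.le_succ i1)
      (Submodule.smul_mem _ t (add_mem (PP_mono d θs n.le_succ k)
        (Submodule.smul_mem _ (θ n) (wv_mem d θs n.lt_succ_self))))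
    rw [sub_add_cancel, ← map_smul, ← map_add, sub_add_cancel] at this
    exact this

lemma tri_irred {d : ℕ} {θ θs : ℤ → F} {a b c : ℕ → F} {β γ γs astar0 Ω : F}
    (h : Thm2Conds d θ θs a b c β γ γs astar0 Ω) : IsIrredTridiag (triMat d a b c) := by
  obtain ⟨h1, h2, h3, h4, hb, hc, h5, h6, h7, h8, h9⟩ := h
  refine ⟨fun i j hij => ?_, fun i j hij => ?_⟩
  · simp only [triMat, Matrix.of_apply]
    rw [if_neg (by omega), if_neg (by omega), if_neg (by omega)]
  · simp only [triMat, Matrix.of_apply]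
    rw [if_neg (by omega)]
    rcases hij with hij | hij
    · rw [if_pos hij]
      have := h4 j (by omega) (by omega)
      rw [← hij] at this
      exact left_ne_zero_of_mul this
    · rw [if_neg (by omega), if_pos hij]
      exact right_ne_zero_of_mul (h4 i (by omega) (by omega))

open Polynomial in
lemma single_mem {d : ℕ} {θ θs : ℤ → F} {a b c : ℕ → F} {β γ γs astar0 Ω : F}
    (h : Thm2Conds d θ θs a b c β γ γs astar0 Ω) (k : ℕ) (hk : k < d + 1) :
    (Pi.single ⟨k, hk⟩ 1 : Fin (d + 1) → F) ∈ PP d θs (d + 1) := by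
  induction k using Nat.strong_induction_on with
  | _ k ih =>
  rcases k with _ | k
  · obtain ⟨h1, h2, -⟩ := h
    set p : F[X] := ∏ i ∈ Finset.range d, (X - C (θs ((i : ℤ) + 1))) with hp
    have hp0 : p.eval (θs 0) ≠ 0 := by
      rw [hp, eval_prod, Finset.prod_ne_zero_iff]
      intro i hi
      have := h2 (i + 1) (by omega) (by simp at hi; omega)
      simpa [sub_eq_zero] using this.symm
    have hm : ev d θs p ∈ PP d θs (d + 1) := by
      apply Submodule.mem_map_of_mem
      rw [mem_degreeLT]
      refine lt_of_le_of_lt degree_le_natDegree ?_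
      rw [hp, natDegree_finsetProd_X_sub_C_eq_card, Finset.card_range]
      exact_mod_cast d.lt_succ_self
    have : (Pi.single ⟨0, hk⟩ 1 : Fin (d + 1) → F) = (p.eval (θs 0))⁻¹ • ev d θs p := by
      ext ⟨j, hj⟩
      rcases j with _ | j
      · simp [ev_apply, hp0]
      · have : p.eval (θs ((j : ℤ) + 1)) = 0 := by
          rw [hp, eval_prod]
          exact Finset.prod_eq_zero (i := j) (by simp; omega) (by simp)
        simp [ev_apply, this, Pi.single_apply]
    rw [this]
    exact Submodule.smul_mem _ _ hm
  · have hir := tri_irred h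
    have hA := A_PP h (d + 1) le_rfl _ (ih k (by omega) (by omega))
    set M := triMat d a b c
    have e : Matrix.toLin' M (Pi.single ⟨k, by omega⟩ 1) =
        ∑ j : Fin (d + 1), M j ⟨k, by omega⟩ • (Pi.single j 1 : Fin (d + 1) → F) := by
      ext i
      simp [Finset.sum_apply, Pi.single_apply]
    rw [e, ← Finset.add_sum_erase _ _ (Finset.mem_univ ⟨k + 1, hk⟩)] at hA
    have h2 := hir.2 ⟨k + 1, hk⟩ ⟨k, by omega⟩ (Or.inr rfl)
    have h3 : ∑ j ∈ Finset.univ.erase (⟨k + 1, hk⟩ : Fin (d + 1)),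
        M j ⟨k, by omega⟩ • (Pi.single j 1 : Fin (d + 1) → F) ∈ PP d θs (d + 1) := by
      refine sum_mem fun j hj => ?_
      have hj' : (j : ℕ) ≠ k + 1 := fun hh => (Finset.ne_of_mem_erase hj) (Fin.ext hh)
      by_cases hjk : (j : ℕ) < k + 1
      · exact Submodule.smul_mem _ _ (ih j hjk j.2)
      · rw [hir.1 j ⟨k, by omega⟩ (Or.inr (by simp; omega)), zero_smul]; exact zero_mem _
    have h4 := (Submodule.add_mem_iff_left _ h3).1 hA
    exact (Submodule.smul_mem_iff _ h2).1 h4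

lemma PP_top {d : ℕ} {θ θs : ℤ → F} {a b c : ℕ → F} {β γ γs astar0 Ω : F}
    (h : Thm2Conds d θ θs a b c β γ γs astar0 Ω) (x) : x ∈ PP d θs (d + 1) := by
  have : x = ∑ j : Fin (d + 1), x j • (Pi.single j 1 : Fin (d + 1) → F) := by
    ext i; simp [Finset.sum_apply, Pi.single_apply]
  rw [this]
  exact sum_mem fun j _ => Submodule.smul_mem _ _ (single_mem h j j.2)

lemma θs_inj {d : ℕ} {θ θs : ℤ → F} {a b c : ℕ → F} {β γ γs astar0 Ω : F}
    (h : Thm2Conds d θ θs a b c β γ γs astar0 Ω) :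
    Function.Injective fun i : Fin (d + 1) => θs ((i : ℕ) : ℤ) := by
  intro i j hij
  by_contra hne
  obtain ⟨p, -, hp⟩ := PP_top h (Pi.single i 1)
  have e1 := congrFun hp i
  have e2 := congrFun hp j
  simp only [ev_apply] at e1 e2 hij
  rw [hij, e2] at e1
  rw [Pi.single_eq_of_ne (Ne.symm hne), Pi.single_eq_same] at e1
  exact zero_ne_one e1

open Polynomial in
lemma wv_notMem {d : ℕ} {θ θs : ℤ → F} {a b c : ℕ → F} {β γ γs astar0 Ω : F}
    (h : Thm2Conds d θ θs a b c β γ γs astar0 Ω) (n : ℕ) (hn : n ≤ d) :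
    wv d θs n ∉ PP d θs n := by
  rintro ⟨q, hq, e⟩
  have hq : q ∈ degreeLT F n := hq
  rw [mem_degreeLT] at hq
  have hdeg : (X ^ n - q).degree = (n : WithBot ℕ) := by
    rw [degree_sub_eq_left_of_degree_lt] <;> simp [hq]
  have hnd : (X ^ n - q).natDegree = n := natDegree_eq_of_degree_eq_some hdeg
  have : X ^ n - q = 0 := by
    refine eq_zero_of_natDegree_lt_card_of_eval_eq_zero _ (θs_inj h) (fun i => ?_) ?_
    · have := congrFun e i
      simp only [wv, ev_apply] at this
      rw [eval_sub, this, sub_self]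
    · rw [hnd]; simp; omega
  rw [this, degree_zero] at hdeg
  exact absurd hdeg (by simp)

lemma solve {d : ℕ} {θ θs : ℤ → F} {a b c : ℕ → F} {β γ γs astar0 Ω : F}
    (h : Thm2Conds d θ θs a b c β γ γs astar0 Ω) (n : ℕ) (hn : n ≤ d) (m : ℕ) : m ≤ n →
    ∀ x ∈ PP d θs m, ∃ y ∈ PP d θs m, Matrix.toLin' (triMat d a b c) y - θ n • y = x := by
  induction m with
  | zero => intro _ x hx; exact ⟨0, zero_mem _, by simp [PP_zero d θs hx]⟩
  | succ m ih =>
    intro hm x hx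
    obtain ⟨t, ht⟩ := PP_succ d θs hx
    have k := key_vec h m (by omega)
    have hne : θ m - θ n ≠ 0 := sub_ne_zero.2 (h.1 m n (by omega) (by omega) (by omega)
      (by omega) (by omega))
    obtain ⟨y, hy, e⟩ := ih (by omega) _ (sub_mem ht (Submodule.smul_mem _ (t / (θ m - θ n)) k))
    refine ⟨y + (t / (θ m - θ n)) • wv d θs m, add_mem (PP_mono d θs m.le_succ hy)
      (Submodule.smul_mem _ _ (wv_mem d θs m.lt_succ_self)), ?_⟩
    rw [map_add, map_smul, smul_add, add_sub_add_comm, e]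
    ext i
    simp only [Pi.add_apply, Pi.sub_apply, Pi.smul_apply, smul_eq_mul]
    field_simp
    ring

lemma exists_eig {d : ℕ} {θ θs : ℤ → F} {a b c : ℕ → F} {β γ γs astar0 Ω : F}
    (h : Thm2Conds d θ θs a b c β γ γs astar0 Ω) (n : ℕ) (hn : n ≤ d) :
    ∃ u, Matrix.toLin' (triMat d a b c) u = θ n • u ∧ u - wv d θs n ∈ PP d θs n := by
  obtain ⟨y, hy, e⟩ := solve h n hn n le_rfl _ (key_vec h n hn)
  refine ⟨wv d θs n - y, ?_, by simpa using hy⟩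
  rw [map_sub, smul_sub]
  rw [sub_eq_sub_iff_sub_eq_sub, e]

/-- A weighted symmetric bilinear form. -/
def Bf {d : ℕ} (k : Fin (d + 1) → F) : (Fin (d + 1) → F) →ₗ[F] (Fin (d + 1) → F) →ₗ[F] F :=
  LinearMap.mk₂ F (fun x y => ∑ i, k i * (x i * y i))
    (fun x x' y => by rw [← Finset.sum_add_distrib]; congr 1; ext; simp; ring)
    (fun t x y => by rw [smul_eq_mul, Finset.mul_sum]; congr 1; ext; simp; ring)
    (fun x y y' => by rw [← Finset.sum_add_distrib]; congr 1; ext; simp; ring)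
    (fun t x y => by rw [smul_eq_mul, Finset.mul_sum]; congr 1; ext; simp; ring)

lemma Bf_apply {d : ℕ} (k x y : Fin (d + 1) → F) : Bf k x y = ∑ i, k i * (x i * y i) := rfl

lemma Bf_comm {d : ℕ} (k x y : Fin (d + 1) → F) : Bf k x y = Bf k y x := by
  simp only [Bf_apply, mul_comm (x _)]

lemma Bf_selfadj {d : ℕ} (k : Fin (d + 1) → F) (M : Matrix (Fin (d + 1)) (Fin (d + 1)) F)
    (hM : ∀ i j, k i * M i j = k j * M j i) (x y : Fin (d + 1) → F) :
    Bf k (Matrix.toLin' M x) y = Bf k x (Matrix.toLin' M y) := by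
  simp only [Bf_apply, Matrix.toLin'_apply, Matrix.mulVec, dotProduct, Finset.mul_sum,
    Finset.sum_mul]
  rw [Finset.sum_comm]
  refine Finset.sum_congr rfl fun i _ => Finset.sum_congr rfl fun j _ => ?_
  linear_combination (x i * y j) * hM j i

lemma exists_weights {d : ℕ} {θ θs : ℤ → F} {a b c : ℕ → F} {β γ γs astar0 Ω : F}
    (h : Thm2Conds d θ θs a b c β γ γs astar0 Ω) :
    ∃ k : Fin (d + 1) → F, (∀ i, k i ≠ 0) ∧
      ∀ i j, k i * triMat d a b c i j = k j * triMat d a b c j i := by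
  obtain ⟨h1, h2, h3, h4, hb, hc, h5, h6, h7, h8, h9⟩ := h
  have hb0 : ∀ i, i < d → b i ≠ 0 := fun i hi => by
    have := h4 (i + 1) (by omega) (by omega)
    exact left_ne_zero_of_mul this
  have hc0 : ∀ i, i < d → c (i + 1) ≠ 0 := fun i hi =>
    right_ne_zero_of_mul (h4 (i + 1) (by omega) (by omega))
  set K : ℕ → F := fun n => ∏ i ∈ Finset.range n, (b i / c (i + 1)) with hK
  have hstep : ∀ i, i < d → K i * b i = K (i + 1) * c (i + 1) := by
    intro i hi
    have := hc0 i hi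
    simp only [hK, Finset.prod_range_succ]
    field_simp
  refine ⟨fun i => K i, fun i => ?_, fun i j => ?_⟩
  · rw [hK]
    simp only [Finset.prod_ne_zero_iff]
    intro l hl
    have : l < d := by simp at hl; omega
    exact div_ne_zero (hb0 l this) (hc0 l this)
  · obtain ⟨i, hi⟩ := i
    obtain ⟨j, hj⟩ := j
    simp only [triMat, Matrix.of_apply]
    rcases eq_or_ne i j with rfl | h1
    · simp
    rcases eq_or_ne (i + 1) j with rfl | h2
    · simp [hstep i (by omega), show ¬ (i + 1 + 1 = i) by omega]
    rcases eq_or_ne (j + 1) i with rfl | h3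
    · simp [hstep j (by omega), show ¬ (j + 1 + 1 = j) by omega]
    simp [h1, h2, h3, h1.symm]

/-- **Second main theorem** (Theorem 4.1 of the paper). Under conditions (i)–(viii),
the irreducible tridiagonal matrix `A = triMat d a b c` and the diagonal matrix
`As = diag(θs 0, …, θs d)` form a Leonard pair on `𝔽^{d+1}`; moreover `A` is
multiplicity-free with eigenvalues `θ 0, …, θ d`, `As` is multiplicity-free with
eigenvalues `θs 0, …, θs d`, and `(A; E; As; Es)` is a Leonard system where `E i`
(resp. `Es i`) is the primitive idempotent of `A` (resp. `As`) for `θ i` (resp. `θs i`). -/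
theorem second_main_theorem {F : Type*} [Field F]
    (d : ℕ) (hd : 1 ≤ d)
    (θ θs : ℤ → F) (a b c : ℕ → F) (β γ γs astar0 Ω : F)
    (h : Thm2Conds d θ θs a b c β γ γs astar0 Ω) :
    IsIrredTridiag (triMat d a b c) ∧
    IsLeonardPair d (Matrix.toLin' (triMat d a b c))
      (Matrix.toLin' (Matrix.diagonal fun i : Fin (d + 1) => θs ((i : ℕ) : ℤ))) ∧
    ∃ E Es : Fin (d + 1) → Module.End F (Fin (d + 1) → F),
      IdempSysOf d (Matrix.toLin' (triMat d a b c)) (fun i : Fin (d + 1) => θ ((i : ℕ) : ℤ)) E ∧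
      IdempSysOf d (Matrix.toLin' (Matrix.diagonal fun i : Fin (d + 1) => θs ((i : ℕ) : ℤ)))
        (fun i : Fin (d + 1) => θs ((i : ℕ) : ℤ)) Es ∧
      IsLeonardSystem d (Matrix.toLin' (triMat d a b c)) E
        (Matrix.toLin' (Matrix.diagonal fun i : Fin (d + 1) => θs ((i : ℕ) : ℤ))) Es := by
  have hθ : Function.Injective fun i : Fin (d + 1) => θ ((i : ℕ) : ℤ) := by
    intro i j hij
    by_contra hne
    exact h.1 (i : ℕ) (j : ℕ) (by omega) (by omega) (by omega) (by omega)
      (fun hh => hne (Fin.ext (by exact_mod_cast hh))) hij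
  have hθs := θs_inj h
  have hir := tri_irred h
  obtain ⟨k, hk0, hk⟩ := exists_weights h
  have hex : ∀ i : Fin (d + 1), ∃ u, Matrix.toLin' (triMat d a b c) u = θ ((i : ℕ) : ℤ) • u ∧
      u - wv d θs i ∈ PP d θs i := fun i => exists_eig h i (by omega)
  choose u hu1 hu2 using hex
  have htop := PP_top h
  have hnot := wv_notMem h
  have hSA := Bf_selfadj k _ hk
  have hSs := Bf_selfadj k (Matrix.diagonal fun i : Fin (d + 1) => θs ((i : ℕ) : ℤ))
    (fun i j => by
      rcases eq_or_ne i j with rfl | hij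
      · rfl
      · simp [hij, hij.symm])
  have hAsP := fun n x hx => As_PP d θs (n := n) (x := x) hx
  have hAsw := As_wv d θs
  set A := Matrix.toLin' (triMat d a b c) with hAdef
  set As := Matrix.toLin' (Matrix.diagonal fun i : Fin (d + 1) => θs ((i : ℕ) : ℤ)) with hAsdef
  have horth : ∀ i j, i ≠ j → Bf k (u i) (u j) = 0 := by
    intro i j hij
    have := hSA (u i) (u j)
    rw [hu1, hu1, map_smul, map_smul, LinearMap.smul_apply, smul_eq_mul, smul_eq_mul] at this
    have hne : θ ((i : ℕ) : ℤ) - θ ((j : ℕ) : ℤ) ≠ 0 := sub_ne_zero.2 fun hh => hij (hθ hh)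
    refine (mul_eq_zero.1 (?_ : (θ ((i : ℕ) : ℤ) - θ ((j : ℕ) : ℤ)) * _ = 0)).resolve_left hne
    rw [sub_mul, this, sub_self]
  have hzero : ∀ (i : Fin (d + 1)) (m : ℕ), m ≤ d + 1 →
      (∀ j : Fin (d + 1), (j : ℕ) < m → Bf k (u i) (u j) = 0) →
      ∀ x ∈ PP d θs m, Bf k (u i) x = 0 := by
    intro i m
    induction m with
    | zero => intro _ _ x hx; rw [PP_zero d θs hx, map_zero]
    | succ m ih =>
      intro hm hj x hx
      have ih := ih (by omega) (fun j hj' => hj j (by omega))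
      obtain ⟨t, ht⟩ := PP_succ d θs hx
      have e1 := ih _ ht
      have e2 := ih _ (hu2 ⟨m, by omega⟩)
      have e3 := hj ⟨m, by omega⟩ (by simp)
      rw [map_sub, e3, zero_sub, neg_eq_zero] at e2
      rw [map_sub, map_smul, e2, smul_zero, sub_zero] at e1
      exact e1
  have hlow : ∀ (i : Fin (d + 1)), ∀ x ∈ PP d θs i, Bf k (u i) x = 0 := fun i =>
    hzero i i (by omega) fun j hj => horth i j (fun hh => by rw [hh] at hj; omega)
  have hnn : ∀ i, Bf k (u i) (u i) ≠ 0 := by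
    intro i h0
    have hz : ∀ x, Bf k (u i) x = 0 := fun x => hzero i (d + 1) le_rfl (fun j _ => by
      rcases eq_or_ne i j with rfl | hij
      · exact h0
      · exact horth i j hij) x (htop x)
    have hui : u i = 0 := by
      ext l
      have := hz (Pi.single l 1)
      rw [Bf_apply, Finset.sum_eq_single l (fun j _ hj => by simp [hj]) (by simp)] at this
      simpa [hk0 l] using this
    have := hu2 i
    rw [hui, zero_sub, neg_mem_iff] at this
    exact hnot i (by omega) this
  have hli : LinearIndependent F u := by
    rw [Fintype.linearIndependent_iff]
    intro g hg i
    have := congrArg (Bf k (u i)) hg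
    rw [map_sum, map_zero, Finset.sum_eq_single i
      (fun j _ hj => by rw [map_smul, horth i j hj.symm, smul_zero]) (by simp)] at this
    simpa [hnn i] using this
  let bas := basisOfLinearIndependentOfCardEqFinrank hli (by simp)
  have hbas : ∀ i, bas i = u i := fun i => by simp [bas]
  have hrepr : ∀ x i, Bf k (u i) x = Bf k (u i) (u i) * bas.repr x i := by
    intro x i
    conv_lhs => rw [← bas.sum_repr x]
    rw [map_sum, Finset.sum_eq_single i
      (fun j _ hj => by rw [map_smul, hbas, horth i j hj.symm, smul_zero]) (by simp)]
    rw [map_smul, hbas, smul_eq_mul, mul_comm]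
  have hMat : ∀ i j, Bf k (u i) (As (u j)) =
      Bf k (u i) (u i) * LinearMap.toMatrix bas bas As i j := by
    intro i j
    rw [hrepr, LinearMap.toMatrix_apply, hbas]
  have hAsu : ∀ j : Fin (d + 1), As (u j) - wv d θs ((j : ℕ) + 1) ∈ PP d θs ((j : ℕ) + 1) := by
    intro j
    rw [← hAsw, ← map_sub]
    exact hAsP _ _ (hu2 j)
  have hS0 : ∀ i j : Fin (d + 1), (j : ℕ) + 1 < i → Bf k (u i) (As (u j)) = 0 := by
    intro i j hij
    apply hlow
    have := add_mem (PP_mono d θs hij.le (hAsu j)) (wv_mem d θs hij)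
    simpa using this
  have hS1 : ∀ i j : Fin (d + 1), (j : ℕ) + 1 = i → Bf k (u i) (As (u j)) ≠ 0 := by
    intro i j hij
    have e1 := hlow i _ (hij ▸ hAsu j)
    have e2 := hlow i _ (hu2 i)
    rw [map_sub, sub_eq_zero] at e1 e2
    rw [e1, ← e2]
    exact hnn i
  have hsymm : ∀ i j, Bf k (u i) (As (u j)) = Bf k (u j) (As (u i)) := fun i j => by
    rw [← hSs, Bf_comm]
  have hirs : IsIrredTridiag (LinearMap.toMatrix bas bas As) := by
    constructor
    · intro i j hij
      have : Bf k (u i) (As (u j)) = 0 := by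
        rcases hij with hij | hij
        · rw [hsymm]; exact hS0 j i hij
        · exact hS0 i j hij
      rw [hMat] at this
      exact (mul_eq_zero.1 this).resolve_left (hnn i)
    · intro i j hij
      have : Bf k (u i) (As (u j)) ≠ 0 := by
        rcases hij with hij | hij
        · rw [hsymm]; exact hS1 j i hij
        · exact hS1 i j hij
      rw [hMat] at this
      exact right_ne_zero_of_mul this
  let sb := Pi.basisFun F (Fin (d + 1))
  have hA1 : LinearMap.toMatrix sb sb A = triMat d a b c := by
    rw [hAdef, ← Matrix.toLin_eq_toLin', LinearMap.toMatrix_toLin]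
  have hAs1 : LinearMap.toMatrix sb sb As =
      Matrix.diagonal fun i : Fin (d + 1) => θs ((i : ℕ) : ℤ) := by
    rw [hAsdef, ← Matrix.toLin_eq_toLin', LinearMap.toMatrix_toLin]
  have hI1 : IdempSysOf d A (fun i : Fin (d + 1) => θ ((i : ℕ) : ℤ)) (Eb bas) :=
    Eb_idemp bas A _ hθ fun i => by rw [hbas, hu1]
  have hI2 : IdempSysOf d As (fun i : Fin (d + 1) => θs ((i : ℕ) : ℤ)) (Eb sb) :=
    Eb_idemp sb As _ hθs fun i => by
      ext j
      rcases eq_or_ne i j with rfl | hij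
      · simp [sb, hAsdef, Matrix.mulVec_diagonal]
      · simp [sb, hAsdef, Matrix.mulVec_diagonal, hij, hij.symm]
  refine ⟨hir, ⟨⟨sb, ?_, ?_⟩, ⟨bas, hirs, ?_⟩⟩, Eb bas, Eb sb, hI1, hI2,
    ⟨_, hI1⟩, ⟨_, hI2⟩, ?_, ?_, ?_, ?_⟩
  · rw [hA1]; exact hir
  · rw [hAs1]; exact Matrix.isDiag_diagonal _
  · intro i j hij
    rw [LinearMap.toMatrix_apply, hbas, hu1, ← hbas]
    simp [hij, hij.symm]
  · intro i j hij
    rw [Eb_mul_eq_zero, hA1]; exact hir.1 i j hij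
  · intro i j hij
    rw [Ne, Eb_mul_eq_zero, hA1]; exact hir.2 i j hij
  · intro i j hij
    rw [Eb_mul_eq_zero]; exact hirs.1 i j hij
  · intro i j hij
    rw [Ne, Eb_mul_eq_zero]; exact hirs.2 i j hij

end LeonardPaper
end

section
/- Let 𝔽 be a field and d ≥ 1 an integer. Let θ_{−1}, θ_0, θ_1 ∈ 𝔽, let {θ*_i}_{i=−1}^{d+1} be scalars in 𝔽, and let {a_i}_{i=0}^{d}, {b_i}_{i=0}^{d−1}, {c_i}_{i=1}^{d} be scalars in 𝔽; set b_d = c_0 = 0. Let β, γ, γ*, ω, a*_0 ∈ 𝔽 and suppose: γ = θ_{−1} − βθ_0 + θ_1; γ* = θ*_{i−1} − βθ*_i + θ*_{i+1} for 0 ≤ i ≤ d; c_i + a_i + b_i = θ_0 for 0 ≤ i ≤ d; c_i(θ*_{i−1} − θ*_i) − b_i(θ*_i − θ*_{i+1}) = (θ_1 − θ_0)(θ*_i − a*_0) for 0 ≤ i ≤ d; and a_i(θ*_i − θ*_{i+1}) + a_{i−1}(θ*_{i−1} − θ*_{i−2}) − γ(θ*_{i−1} + θ*_i) = ω for 1 ≤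 i ≤ d. Then for 1 ≤ i ≤ d, c_i(θ*_{i−1} − θ*_{i+1}) − b_{i−1}(θ*_{i−2} − θ*_i) − (θ_0 − θ_{−1})(θ*_{i−1} + θ*_i) = Ω, where Ω = 2θ_0(a*_0 − γ*) − 2θ_1 a*_0 − ω. -/
/-- Proposition 2.8 of the paper: the algebraic identity
`c_i(θ*_{i-1} − θ*_{i+1}) − b_{i-1}(θ*_{i-2} − θ*_i) − (θ_0 − θ_{-1})(θ*_{i-1} + θ*_i) = Ω`
for `1 ≤ i ≤ d`, where `Ω = 2θ_0(a*_0 − γ*) − 2θ_1 a*_0 − ω`. -/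
theorem split_Omega_identity {F : Type*} [Field F]
    (d : ℕ) (hd : 1 ≤ d)
    (θm1 θ0 θ1 : F) (θs : ℤ → F)
    (a b c : ℕ → F) (hbd : b d = 0) (hc0 : c 0 = 0)
    (β γ γs ω astar0 : F)
    (hγ : γ = θm1 - β * θ0 + θ1)
    (hγs : ∀ i : ℤ, 0 ≤ i → i ≤ d → γs = θs (i - 1) - β * θs i + θs (i + 1))
    (hsum : ∀ i : ℕ, i ≤ d → c i + a i + b i = θ0)
    (hbici : ∀ i : ℕ, i ≤ d →
      c i * (θs ((i : ℤ) - 1) - θs i) - b i * (θs i - θs ((i : ℤ) + 1))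
        = (θ1 - θ0) * (θs i - astar0))
    (hω : ∀ i : ℕ, 1 ≤ i → i ≤ d →
      a i * (θs i - θs ((i : ℤ) + 1)) + a (i - 1) * (θs ((i : ℤ) - 1) - θs ((i : ℤ) - 2))
        - γ * (θs ((i : ℤ) - 1) + θs i) = ω) :
    ∀ i : ℕ, 1 ≤ i → i ≤ d →
      c i * (θs ((i : ℤ) - 1) - θs ((i : ℤ) + 1)) - b (i - 1) * (θs ((i : ℤ) - 2) - θs i)
        - (θ0 - θm1) * (θs ((i : ℤ) - 1) + θs i)
        = 2 * θ0 * (astar0 - γs) - 2 * θ1 * astar0 - ω := by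
  intro i h1 hid
  obtain ⟨j, rfl⟩ : ∃ j, i = j + 1 := ⟨i - 1, by omega⟩
  have e1 := hγs ((j : ℤ) + 1) (by omega) (by omega)
  have e2 := hγs (j : ℤ) (by omega) (by omega)
  have s1 := hsum (j + 1) hid
  have s2 := hsum j (by omega)
  have t1 := hbici (j + 1) hid
  have t2 := hbici j (by omega)
  have w := hω (j + 1) h1 hid
  have q1 : (j : ℤ) + 1 - 1 = j := by ring
  have q2 : (j : ℤ) + 1 - 2 = j - 1 := by ring
  simp only [Nat.cast_add, Nat.cast_one, Nat.add_sub_cancel, q1, q2] at *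
  linear_combination -w + (θs ((j : ℤ) + 1) - θs ((j : ℤ) + 1 + 1)) * s1
    + (θs (j : ℤ) - θs ((j : ℤ) - 1)) * s2 + t1 + t2 + θ0 * e1 + θ0 * e2
    - (θs (j : ℤ) + θs ((j : ℤ) + 1)) * hγ
end

section
/- Let 𝔽 be a field whose characteristic is zero or an odd prime greater than d, and let d ≥ 1 be an integer. Define θ_i = d − 2i and θ*_i = d − 2i for 0 ≤ i ≤ d, b_i = d − i for 0 ≤ i ≤ d−1, c_i = i for 1 ≤ i ≤ d, and a_i = 0 for 0 ≤ i ≤ d. Then conditions (i)–(viii) of the second main theorem are satisfied with β = 2, γ = 0, γ* = 0, θ_{−1} = d + 2, θ*_{−1} = d + 2, θ*_{d+1} = −d − 2, and a*_0 = 0; consequently the (d+1)×(d+1) irreducible tridiagonal matrix A over 𝔽 with zero diagonal, superdiagonal entries b_0,…,b_{d−1}, and subdiagonal entries c_1,…,c_d, together with A* = diag(θ*_0,…,θ*_d), form a Leonard pair on 𝔽^{d+1}, with A multiplicity-free with eigenvalues θ_0,…,θ_d. -/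
namespace LeonardPaper

variable {F : Type*} [Field F] {V : Type*} [AddCommGroup V] [Module F V]

section helpers

variable {K : Type*} [Field K]

/-- Coefficients `(-2)^k / binom d k`, defined as a product. -/
def kc (K : Type*) [Field K] (d k : ℕ) : K :=
  ∏ m ∈ Finset.range k, (-2 * ((m : K) + 1) / ((d : K) - m))

/-- Krawtchouk polynomial values. -/
def kP (K : Type*) [Field K] (d i j : ℕ) : K :=
  ∑ k ∈ Finset.range (d + 1), kc K d k * (j.choose k : K) * (i.choose k : K)

lemma kP_symm (d i j : ℕ) : kP K d i j = kP K d j i := by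
  unfold kP
  refine Finset.sum_congr rfl fun k _ => by ring

lemma kP_zero (d j : ℕ) : kP K d 0 j = 1 := by
  unfold kP
  rw [Finset.sum_eq_single 0]
  · simp [kc]
  · intro k _ hk
    rw [Nat.choose_eq_zero_of_lt (Nat.pos_of_ne_zero hk)]
    simp
  · simp

lemma choose_up (i k : ℕ) :
    ((i : K) + 1 - k) * ((i + 1).choose k : K) = ((i : K) + 1) * (i.choose k : K) := by
  rcases le_or_gt k (i + 1) with h | h
  · have := congrArg (Nat.cast : ℕ → K) (Nat.choose_mul_succ_eq i k)
    push_cast [Nat.cast_sub h] at this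
    linear_combination -this
  · rw [Nat.choose_eq_zero_of_lt h, Nat.choose_eq_zero_of_lt (by omega)]
    simp

lemma choose_down (i k : ℕ) :
    (i : K) * ((i - 1).choose k : K) = ((i : K) - k) * (i.choose k : K) := by
  rcases i with _ | i
  · rcases k with _ | k <;> simp
  · have := choose_up (K := K) i k
    rw [Nat.add_sub_cancel]
    push_cast
    linear_combination -this

lemma choose_right (j k : ℕ) :
    ((k : K) + 1) * (j.choose (k + 1) : K) = ((j : K) - k) * (j.choose k : K) := by
  rcases le_or_gt k j with h | h
  · have := congrArg (Nat.cast : ℕ → K) (Nat.choose_succ_right_eq j k)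
    push_cast [Nat.cast_sub h] at this
    linear_combination this
  · rw [Nat.choose_eq_zero_of_lt h, Nat.choose_eq_zero_of_lt (by omega)]
    simp

lemma kP_rec (d : ℕ) (hne : ∀ k < d, (d : K) - k ≠ 0) (i j : ℕ) (hj : j ≤ d) :
    (i : K) * kP K d (i - 1) j + ((d : K) - i) * kP K d (i + 1) j
      = ((d : K) - 2 * j) * kP K d i j := by
  let G : ℕ → K := fun k => kc K d k * (j.choose k : K) * ((d : K) - k + 1) *
    (((i + 1).choose k : K) - (i.choose k : K))
  have key : ∀ k ∈ Finset.range (d + 1),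
      (i : K) * (kc K d k * (j.choose k : K) * ((i - 1).choose k : K))
        + ((d : K) - i) * (kc K d k * (j.choose k : K) * ((i + 1).choose k : K))
        - ((d : K) - 2 * j) * (kc K d k * (j.choose k : K) * (i.choose k : K))
      = G k - G (k + 1) := by
    intro k hk
    have h1 := choose_down (K := K) i k
    have h2 := choose_up (K := K) i k
    have h3 : G (k + 1) = -2 * ((j : K) - k) * (kc K d k * (j.choose k : K) * (i.choose k : K)) := by
      have hp : (((i + 1).choose (k + 1) : ℕ) : K) = (i.choose k : K) + (i.choose (k + 1) : K) := by
        rw [Nat.choose_succ_succ]; push_cast; ring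
      simp only [G]
      rw [hp]
      have h5 := choose_right (K := K) j k
      rcases Nat.lt_or_ge k d with h | h
      · have h4 : kc K d (k + 1) * ((d : K) - k) = -2 * ((k : K) + 1) * kc K d k := by
          unfold kc
          rw [Finset.prod_range_succ]
          have := hne k h
          field_simp
        push_cast
        linear_combination (j.choose (k + 1) : K) * (i.choose k : K) * h4
          + (-2) * kc K d k * (i.choose k : K) * h5
      · rw [Nat.choose_eq_zero_of_lt (show j < k + 1 by omega)] at h5 ⊢
        push_cast at h5 ⊢
        linear_combination (-2) * kc K d k * (i.choose k : K) * h5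
    rw [h3]
    simp only [G]
    linear_combination kc K d k * (j.choose k : K) * h1 - kc K d k * (j.choose k : K) * h2
  have hs := Finset.sum_congr rfl key
  rw [Finset.sum_range_sub', Finset.sum_sub_distrib, Finset.sum_add_distrib,
    ← Finset.mul_sum, ← Finset.mul_sum, ← Finset.mul_sum] at hs
  have g0 : G 0 = 0 := by simp [G]
  have g1 : G (d + 1) = 0 := by
    simp only [G]
    rw [Nat.choose_eq_zero_of_lt (show j < d + 1 by omega)]
    simp
  rw [g0, g1] at hs
  unfold kP
  linear_combination hs

lemma triMat_sum (d : ℕ) (b c f : ℕ → K) (hb : b d = 0) (hc : c 0 = 0) (i : Fin (d + 1)) :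
    ∑ l : Fin (d + 1), triMat d (fun _ => 0) b c i l * f l
      = c i * f (i - 1) + b i * f (i + 1) := by
  obtain ⟨i, hi⟩ := i
  have h1 : ∀ l : Fin (d + 1), triMat d (fun _ => 0) b c ⟨i, hi⟩ l * f l
      = (fun l : ℕ => (if i + 1 = l then b i * f l else 0)
        + (if l + 1 = i then c i * f l else 0)) (l : ℕ) := by
    intro l
    simp only [triMat, Matrix.of_apply]
    split_ifs <;> first | omega | simp
  rw [Finset.sum_congr rfl fun l _ => h1 l, Fin.sum_univ_eq_sum_range (fun l : ℕ => (if i + 1 = l then b i * f l else 0)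
        + (if l + 1 = i then c i * f l else 0)) (d + 1), Finset.sum_add_distrib,
    Finset.sum_ite_eq, add_comm]
  congr 1
  · rcases i with _ | i
    · simp [hc]
    · simp only [Nat.add_right_cancel_iff, Nat.add_sub_cancel]
      rw [Finset.sum_ite_eq', if_pos (by simp; omega)]
  · split_ifs with h
    · rfl
    · have : i = d := by simp at h; omega
      subst this
      simp [hb]

lemma idemp_of_basis {V : Type*} [AddCommGroup V] [Module K V] (d : ℕ)
    (bas : Module.Basis (Fin (d + 1)) K V) (A : Module.End K V) (θ : Fin (d + 1) → K)
    (hθ : Function.Injective θ) (hA : ∀ i, A (bas i) = θ i • bas i) :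
    ∃ E : Fin (d + 1) → Module.End K V, IdempSysOf d A θ E := by
  refine ⟨fun i => (bas.coord i).smulRight (bas i), ⟨?_, ?_⟩, ?_, hθ, ?_⟩
  · intro i j
    refine bas.ext fun k => ?_
    by_cases h : i = j
    · subst h
      by_cases hk : k = i <;> simp [Finsupp.single_apply, hk]
    · by_cases hk : k = j
      · subst hk
        simp [Finsupp.single_apply, h, Ne.symm h]
      · simp [Finsupp.single_apply, h, hk]
  · intro i
    have : LinearMap.range ((bas.coord i).smulRight (bas i)) = Submodule.span K {bas i} := by
      apply le_antisymm
      · rintro _ ⟨v, rfl⟩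
        exact Submodule.smul_mem _ _ (Submodule.mem_span_singleton_self _)
      · rw [Submodule.span_singleton_le_iff_mem]
        exact ⟨bas i, by simp⟩
    rw [this]
    exact finrank_span_singleton (bas.ne_zero i)
  · ext v
    simp [LinearMap.sum_apply, bas.sum_repr]
  · intro i
    ext v
    simp only [Module.End.mul_apply, LinearMap.smulRight_apply, map_smul, hA, LinearMap.smul_apply]
    exact smul_comm _ _ _

end helpers

/-- Proposition 5.1 of the paper (Krawtchouk type). With `θ i = θs i = d − 2i`,
`b i = d − i`, `c i = i`, `a i = 0`, the conditions of the second main theorem hold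
with `β = 2`, `γ = γ* = 0`, `θ_{-1} = θ*_{-1} = d + 2`, `θ*_{d+1} = −d − 2`, `a*_0 = 0`;
consequently the corresponding tridiagonal/diagonal pair is a Leonard pair on `𝔽^{d+1}`,
with the tridiagonal member multiplicity-free with eigenvalues `θ 0, …, θ d`. -/
theorem krawtchouk_type {F : Type*} [Field F] (d : ℕ) (hd : 1 ≤ d)
    (hchar : ringChar F = 0 ∨ ((ringChar F).Prime ∧ Odd (ringChar F) ∧ d < ringChar F)) :
    let θ : ℤ → F := fun i => (d : F) - 2 * (i : F)
    let θs : ℤ → F := fun i => (d : F) - 2 * (i : F)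
    let aseq : ℕ → F := fun _ => 0
    let bseq : ℕ → F := fun i => (d : F) - (i : F)
    let cseq : ℕ → F := fun i => (i : F)
    (∃ Ω : F, Thm2Conds d θ θs aseq bseq cseq 2 0 0 0 Ω) ∧
    θ (-1) = (d : F) + 2 ∧ θs (-1) = (d : F) + 2 ∧ θs ((d : ℤ) + 1) = -(d : F) - 2 ∧
    IsIrredTridiag (triMat d aseq bseq cseq) ∧
    IsLeonardPair d (Matrix.toLin' (triMat d aseq bseq cseq))
      (Matrix.toLin' (Matrix.diagonal fun i : Fin (d + 1) => θs ((i : ℕ) : ℤ))) ∧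
    ∃ E : Fin (d + 1) → Module.End F (Fin (d + 1) → F),
      IdempSysOf d (Matrix.toLin' (triMat d aseq bseq cseq))
        (fun i : Fin (d + 1) => θ ((i : ℕ) : ℤ)) E := by
  intro θ θs aseq bseq cseq
  have hnat : ∀ n : ℕ, 1 ≤ n → n ≤ d → (n : F) ≠ 0 := by
    intro n h1 h2 h0
    have hdv := (ringChar.spec F n).mp h0
    rcases hchar with h | ⟨-, -, h⟩
    · rw [h] at hdv
      have := Nat.eq_zero_of_zero_dvd hdv
      omega
    · have := Nat.le_of_dvd (by omega) hdv
      omega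
  have h2 : (2 : F) ≠ 0 := by
    intro h0
    have hdv := (ringChar.spec F 2).mp (by exact_mod_cast h0)
    rcases hchar with h | ⟨hp, ho, h⟩
    · rw [h] at hdv
      have := Nat.eq_zero_of_zero_dvd hdv
      omega
    · have := (Nat.prime_dvd_prime_iff_eq hp Nat.prime_two).mp hdv
      rw [this] at ho
      exact absurd ho (by decide)
  have hsub : ∀ m n : ℕ, m < n → n ≤ d → (n : F) - m ≠ 0 := by
    intro m n h h'
    have := hnat (n - m) (by omega) (by omega)
    rwa [Nat.cast_sub h.le] at this
  have hinjN : ∀ m n : ℕ, m ≤ d → n ≤ d → (m : F) = n → m = n := by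
    intro m n hm hn h
    rcases lt_trichotomy m n with h' | h' | h'
    · exact absurd (by rw [h, sub_self]) (hsub m n h' hn)
    · exact h'
    · exact absurd (by rw [h, sub_self]) (hsub n m h' hm)
  have hθ : ∀ i j : ℤ, 0 ≤ i → i ≤ d → 0 ≤ j → j ≤ d → i ≠ j → θ i ≠ θ j := by
    intro i j hi hi' hj hj' hij h
    lift i to ℕ using hi
    lift j to ℕ using hj
    apply hij
    have h3 : (2 : F) * i = 2 * j := by
      simp only [θ, Int.cast_natCast] at h
      linear_combination -h
    have := hinjN i j (by omega) (by omega) (mul_left_cancel₀ h2 h3)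
    exact_mod_cast this
  have hb : bseq d = 0 := by simp [bseq]
  have hc : cseq 0 = 0 := by simp [cseq]
  have htri : IsIrredTridiag (triMat d aseq bseq cseq) := by
    constructor
    · intro i j h
      simp only [triMat, Matrix.of_apply]
      rw [if_neg (by omega), if_neg (by omega), if_neg (by omega)]
    · intro i j h
      have hi := i.2
      have hj := j.2
      simp only [triMat, Matrix.of_apply]
      rcases h with h | h
      · rw [if_neg (by omega), if_pos h]
        exact hsub i d (by omega) le_rfl
      · rw [if_neg (by omega), if_neg (by omega), if_pos h]
        exact hnat i (by omega) (by omega)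
  have hθinj : Function.Injective (fun i : Fin (d + 1) => θ ((i : ℕ) : ℤ)) := by
    intro i j h
    by_contra hij
    have hi := i.2
    have hj := j.2
    exact hθ _ _ (by omega) (by omega) (by omega) (by omega)
      (fun h' => hij (Fin.ext (by exact_mod_cast h'))) h
  let v : Fin (d + 1) → (Fin (d + 1) → F) := fun j i => kP F d i j
  have hrec : ∀ i j : ℕ, j ≤ d → _ := kP_rec (K := F) d (fun k hk => hsub k d hk le_rfl)
  have hAv : ∀ j, Matrix.toLin' (triMat d aseq bseq cseq) (v j) = θ ((j : ℕ) : ℤ) • v j := by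
    intro j
    ext i
    rw [Matrix.toLin'_apply]
    have h3 := triMat_sum d bseq cseq (fun i => kP F d i j) hb hc i
    have h4 := hrec i j (by have := j.2; omega)
    simp only [Matrix.mulVec, dotProduct, Pi.smul_apply, smul_eq_mul, v]
    refine h3.trans (h4.trans ?_)
    simp [θ]
  have hDv : ∀ j, Matrix.toLin' (Matrix.diagonal fun i : Fin (d + 1) => θs ((i : ℕ) : ℤ)) (v j)
      = ∑ l, triMat d aseq bseq cseq j l • v l := by
    intro j
    ext i
    rw [Matrix.toLin'_apply, Matrix.mulVec_diagonal, Finset.sum_apply]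
    have h3 := triMat_sum d bseq cseq (fun l => kP F d i l) hb hc j
    have h4 := hrec j i (by have := i.2; omega)
    simp only [Pi.smul_apply, smul_eq_mul, v]
    refine Eq.trans ?_ h3.symm
    simp only [kP_symm (K := F) d i]
    refine Eq.trans ?_ h4.symm
    simp [θs]
  have hlin : LinearIndependent F v := by
    refine Module.End.eigenvectors_linearIndependent' (Matrix.toLin' (triMat d aseq bseq cseq))
      (fun i : Fin (d + 1) => θ ((i : ℕ) : ℤ)) hθinj v fun j => ?_
    refine ⟨Module.End.mem_eigenspace_iff.mpr (hAv j), fun h => ?_⟩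
    have h3 := congrFun h 0
    simp only [v, Pi.zero_apply, Fin.val_zero, kP_zero] at h3
    exact one_ne_zero h3
  let bas : Module.Basis (Fin (d + 1)) F (Fin (d + 1) → F) :=
    basisOfLinearIndependentOfCardEqFinrank hlin (by simp)
  have hbas : ∀ j, bas j = v j := fun j => by simp [bas]
  refine ⟨⟨0, ?_⟩, ?_, ?_, ?_, htri, ⟨⟨Pi.basisFun F _, ?_, ?_⟩, ⟨bas, ?_, ?_⟩⟩, ?_⟩
  · refine ⟨hθ, ?_, ?_, ?_, hb, hc, ?_, ?_, ?_, ?_, ?_⟩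
    · intro i h h'
      exact hθ i 0 (by omega) h' le_rfl (by omega) (by omega)
    · intro i _ _
      simp only [θs]; push_cast; ring
    · intro i h h'
      exact mul_ne_zero (hsub (i - 1) d (by omega) le_rfl) (hnat i h h')
    · intro i _
      simp [θ, aseq, bseq, cseq]
    · intro i _
      simp only [θ, θs, bseq, cseq]; push_cast; ring
    · intro i h _
      simp only [θ, θs, bseq, cseq]; push_cast [Nat.cast_sub h]; ring
    · simp only [θ]; push_cast; ring
    · intro i _ _
      simp only [θ]; push_cast; ring
  · simp [θ]
  · simp [θs]
  · simp only [θs]; push_cast; ring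
  · rw [LinearMap.toMatrix_eq_toMatrix']
    simpa using htri
  · rw [LinearMap.toMatrix_eq_toMatrix']
    simpa using Matrix.isDiag_diagonal _
  · have : LinearMap.toMatrix bas bas
        (Matrix.toLin' (Matrix.diagonal fun i : Fin (d + 1) => θs ((i : ℕ) : ℤ)))
        = (triMat d aseq bseq cseq).transpose := by
      ext i j
      rw [LinearMap.toMatrix_apply, hbas, hDv]
      simp only [← hbas]
      rw [bas.repr_sum_self]
      rfl
    rw [this]
    exact ⟨fun i j h => htri.1 j i h.symm, fun i j h => htri.2 j i h.symm⟩
  · intro i j hij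
    rw [LinearMap.toMatrix_apply, hbas, hAv, ← hbas]
    simp [Finsupp.single_apply, Ne.symm hij]
  · exact idemp_of_basis d bas _ _ hθinj fun i => by rw [hbas, hAv]

end LeonardPaper
end

section
/- Let 𝔽 be a field and d ≥ 1 an integer. Let a, b, c, q be nonzero scalars in 𝔽 such that: q^{2i} ≠ 1 for 1 ≤ i ≤ d; neither a² nor b² is among q^{2d−2}, q^{2d−4}, …, q^{2−2d}; and none of abc, a^{−1}bc, ab^{−1}c, abc^{−1} is among q^{d−1}, q^{d−3}, …, q^{1−d}. Define θ_i = aq^{2i−d} + a^{−1}q^{d−2i} and θ*_i = bq^{2i−d} + b^{−1}q^{d−2i} for 0 ≤ i ≤ d; b_0 = (q^{d} − q^{−d})(cq − a^{−1}b^{−1}q^{d})(q^{−1} − abc^{−1}q^{−d})/(bq^{1−d} − b^{−1}q^{d−1}); b_i = (q^{d−i} − q^{i−d})(bq^{i−d} − b^{−1}q^{d−i})(cq^{i+1} − a^{−1}b^{−1}q^{d−i})(q^{−i−1} − abc^{−1}q^{i−d}) / ((bq^{2i−d} − b^{−1}q^{d−2i})(bq^{2i−d+1} − b^{−1}q^{d−2i−1}))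 for 1 ≤ i ≤ d−1; c_i = (q^{i} − q^{−i})(bq^{i} − b^{−1}q^{−i})(a^{−1}q^{i−d−1} − b^{−1}c^{−1}q^{−i})(bq^{i} − acq^{d−i+1}) / ((bq^{2i−d−1} − b^{−1}q^{d−2i+1})(bq^{2i−d} − b^{−1}q^{d−2i})) for 1 ≤ i ≤ d−1; c_d = (q^{d} − q^{−d})(a^{−1}q^{−1} − b^{−1}c^{−1}q^{−d})(bq^{d} − acq)/(bq^{d−1} − b^{−1}q^{1−d}); and a_i = θ_0 − b_i − c_i for 0 ≤ i ≤ d, where b_d = c_0 = 0. Then conditions (i)–(viii) of the second main theorem are satisfied with β = q² + q^{−2}, γ = 0, γ* = 0, θ_{−1} = aq^{−d−2} + a^{−1}q^{d+2}, θ*_{−1} = bq^{−d−2} + b^{−1}q^{d+2}, θ*_{d+1} = bq^{d+2} + b^{−1}q^{−d−2}, and a*_0 = ((b + b^{−1})(aq − a^{−1}q^{−1}) − (c + c^{−1})(q^{d} − q^{−d}))/(aq^{1−d} − a^{−1}q^{d−1}); consequently the (d+1)×(d+1) irreducible tridiagonal matrix A over 𝔽 with diagonal entries a_i, superdiagonal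 entries b_i, and subdiagonal entries c_i, together with A* = diag(θ*_0,…,θ*_d), form a Leonard pair on 𝔽^{d+1}, with A multiplicity-free with eigenvalues θ_0,…,θ_d. -/
namespace LeonardPaper

variable {F : Type*} [Field F] {V : Type*} [AddCommGroup V] [Module F V]

open Matrix in
/-- Span of the vectors `w k` for `k < n`. -/
def Wsp {F : Type*} [Field F] {d : ℕ} (t : Fin (d + 1) → F) (n : ℕ) :
    Submodule F (Fin (d + 1) → F) :=
  Submodule.span F ((fun k : ℕ => fun x => t x ^ k) '' {k | k < n})

section abs
variable {F : Type*} [Field F] {d : ℕ}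

lemma Wsp_mono (t : Fin (d + 1) → F) {m n : ℕ} (h : m ≤ n) : Wsp t m ≤ Wsp t n := by
  apply Submodule.span_mono
  apply Set.image_mono
  intro k hk
  exact lt_of_lt_of_le hk h

lemma mem_Wsp (t : Fin (d + 1) → F) {k n : ℕ} (h : k < n) : (fun x => t x ^ k) ∈ Wsp t n :=
  Submodule.subset_span ⟨k, h, rfl⟩

lemma Wsp_zero (t : Fin (d + 1) → F) : Wsp t 0 = ⊥ := by
  simp [Wsp]

lemma Wsp_succ (t : Fin (d + 1) → F) (n : ℕ) {u : Fin (d + 1) → F} (hu : u ∈ Wsp t (n + 1)) :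
    ∃ s : F, ∃ u' ∈ Wsp t n, u = s • (fun x => t x ^ n) + u' := by
  have : ((fun k : ℕ => fun x => t x ^ k) '' {k | k < n + 1})
      = insert (fun x => t x ^ n) ((fun k : ℕ => fun x => t x ^ k) '' {k | k < n}) := by
    have e : {k | k < n + 1} = insert n {k | k < n} := by
      ext k
      simp
      omega
    rw [e, Set.image_insert_eq]
  rw [Wsp, this, Submodule.mem_span_insert] at hu
  exact hu

lemma Wsp_le (t : Fin (d + 1) → F) (n : ℕ) (f : (Fin (d + 1) → F) →ₗ[F] (Fin (d + 1) → F))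
    (S : Submodule F (Fin (d + 1) → F)) (h : ∀ k < n, f (fun x => t x ^ k) ∈ S)
    {u : Fin (d + 1) → F} (hu : u ∈ Wsp t n) : f u ∈ S := by
  have : Wsp t n ≤ S.comap f := by
    rw [Wsp, Submodule.span_le]
    rintro _ ⟨k, hk, rfl⟩
    exact h k hk
  exact this hu

lemma pow_not_mem_Wsp (t : Fin (d + 1) → F) (ht : Function.Injective t) {n : ℕ} (hn : n ≤ d) :
    (fun x => t x ^ n) ∉ Wsp t n := by
  have hli : LinearIndependent F (fun k : Fin (d + 1) => fun x => t x ^ (k : ℕ)) := by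
    have h1 := Matrix.det_vandermonde_ne_zero_iff.mpr ht
    have h2 := Matrix.linearIndependent_cols_of_det_ne_zero h1
    exact h2
  have h3 := hli.notMem_span_image (s := {k : Fin (d + 1) | (k : ℕ) < n})
    (x := ⟨n, by omega⟩) (by simp)
  intro h
  apply h3
  refine Submodule.span_mono ?_ h
  rintro _ ⟨k, hk, rfl⟩
  have hk' : k < n := hk
  exact ⟨⟨k, by omega⟩, hk, rfl⟩

theorem abstract_leonard (a b c : ℕ → F) (θ : ℕ → F) (t : Fin (d + 1) → F)
    (β ρ ω η κ : F)
    (hirr : IsIrredTridiag (triMat d a b c))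
    (ht : Function.Injective t)
    (hθ : ∀ i j, i ≤ d → j ≤ d → i ≠ j → θ i ≠ θ j)
    (hrec : ∀ i, i + 2 ≤ d → θ (i + 2) = β * θ (i + 1) - θ i)
    (hent : ∀ i j : Fin (d + 1), triMat d a b c i j * (t j ^ 2 - β * t i * t j + t i ^ 2 - ρ)
      = if i = j then ω * t i + η else 0)
    (h0 : (triMat d a b c).mulVec (fun _ => 1) = fun _ => θ 0)
    (h1 : (triMat d a b c).mulVec t = fun x => θ 1 * t x + κ) :
    IsLeonardPair d (Matrix.toLin' (triMat d a b c)) (Matrix.toLin' (Matrix.diagonal t)) ∧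
    ∃ E : Fin (d + 1) → Module.End F (Fin (d + 1) → F),
      IdempSysOf d (Matrix.toLin' (triMat d a b c))
        (fun i : Fin (d + 1) => θ (i : ℕ)) E := by
  set M := triMat d a b c with hM
  set A : (Fin (d + 1) → F) →ₗ[F] (Fin (d + 1) → F) := Matrix.toLin' M with hA
  set D : (Fin (d + 1) → F) →ₗ[F] (Fin (d + 1) → F) := Matrix.toLin' (Matrix.diagonal t) with hD
  have hAa : ∀ u, A u = M.mulVec u := fun u => Matrix.toLin'_apply _ _
  have hDa : ∀ u x, D u x = t x * u x := by
    intro u x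
    rw [hD, Matrix.toLin'_apply, Matrix.mulVec_diagonal]
  let w : ℕ → (Fin (d + 1) → F) := fun k => fun x => t x ^ k
  have hDw : ∀ k, D (w k) = w (k + 1) := by
    intro k
    ext x
    rw [hDa]
    simp only [w]
    ring
  -- Askey-Wilson relation
  have hAW : ∀ u, A (D (D u)) = β • D (A (D u)) - D (D (A u)) + ρ • A u + ω • D u + η • u := by
    intro u
    ext x
    simp only [Pi.add_apply, Pi.sub_apply, Pi.smul_apply, hDa, hAa, Matrix.mulVec, dotProduct,
      smul_eq_mul]
    have : ∑ j, M x j * (t j ^ 2 - β * t x * t j + t x ^ 2 - ρ) * u j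
        = (ω * t x + η) * u x := by
      simp only [hent]
      simp
    have e : ∑ j, M x j * (t j ^ 2 - β * t x * t j + t x ^ 2 - ρ) * u j
      = ∑ j, M x j * (t j * (t j * u j)) - β * (t x * ∑ j, M x j * (t j * u j))
        + t x * (t x * ∑ j, M x j * u j) - ρ * ∑ j, M x j * u j := by
      simp only [Finset.mul_sum, ← Finset.sum_sub_distrib, ← Finset.sum_add_distrib]
      exact Finset.sum_congr rfl fun j _ => by ring
    rw [e] at this
    linear_combination this
  have hDW : ∀ n u, u ∈ Wsp t n → D u ∈ Wsp t (n + 1) := by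
    intro n u hu
    refine Wsp_le t n D _ ?_ hu
    intro k hk
    have := hDw k
    simp only [w] at this
    rw [this]
    exact mem_Wsp t (by omega)
  -- triangular action
  have key : ∀ n, n ≤ d → ∀ k ≤ n, A (w k) - θ k • w k ∈ Wsp t k := by
    intro n
    induction n with
    | zero =>
      intro _ k hk
      obtain rfl : k = 0 := by omega
      have : A (w 0) - θ 0 • w 0 = 0 := by
        have : w 0 = fun _ => 1 := by ext; simp [w]
        rw [this, hAa, h0]
        ext; simp
      rw [this]; exact zero_mem _
    | succ n ih =>
      intro hn k hk
      by_cases hk' : k ≤ n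
      · exact ih (by omega) k hk'
      obtain rfl : k = n + 1 := by omega
      rcases Nat.eq_zero_or_pos n with rfl | hn0
      · have : A (w 1) - θ 1 • w 1 = κ • w 0 := by
          have : w 1 = t := by ext; simp [w]
          rw [this, hAa, h1]
          ext; simp [w]
        rw [this]; exact Submodule.smul_mem _ _ (mem_Wsp t (by omega))
      · obtain ⟨m, rfl⟩ : ∃ m, n = m + 1 := ⟨n - 1, by omega⟩
        have e1 := ih (by omega) (m + 1) le_rfl
        have e0 := ih (by omega) m (by omega)
        have hw : w (m + 1 + 1) = D (D (w m)) := by rw [hDw, hDw]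
        have hfin : A (w (m + 1 + 1)) - θ (m + 1 + 1) • w (m + 1 + 1)
            = β • D (A (w (m + 1)) - θ (m + 1) • w (m + 1))
              - D (D (A (w m) - θ m • w m)) + ρ • (A (w m) - θ m • w m) + (ρ * θ m) • w m
              + ω • w (m + 1) + η • w m := by
          rw [hw, hAW, hDw, hrec m (by omega)]
          simp only [map_sub, map_smul, hDw]
          module
        rw [hfin]
        have mw : ∀ k, k < m + 1 + 1 → w k ∈ Wsp t (m + 1 + 1) := fun k hk => mem_Wsp t hk
        refine add_mem (add_mem (add_mem (add_mem (sub_mem ?_ ?_) ?_) ?_) ?_) ?_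
        · exact Submodule.smul_mem _ _ (hDW _ _ e1)
        · exact hDW _ _ (hDW _ _ e0)
        · exact Submodule.smul_mem _ _ (Wsp_mono t (by omega) e0)
        · exact Submodule.smul_mem _ _ (mw _ (by omega))
        · exact Submodule.smul_mem _ _ (mw _ (by omega))
        · exact Submodule.smul_mem _ _ (mw _ (by omega))
  have key' : ∀ k ≤ d, A (w k) - θ k • w k ∈ Wsp t k := fun k hk => key d le_rfl k hk
  -- solvability
  have solv : ∀ n ≤ d, ∀ m ≤ n, ∀ u ∈ Wsp t m, ∃ u' ∈ Wsp t m, A u' - θ n • u' = u := by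
    intro n hn m
    induction m with
    | zero =>
      intro _ u hu
      rw [Wsp_zero, Submodule.mem_bot] at hu
      exact ⟨0, zero_mem _, by simp [hu]⟩
    | succ m ih =>
      intro hm u hu
      obtain ⟨s, u0, hu0, rfl⟩ := Wsp_succ t m hu
      have hne : θ m - θ n ≠ 0 := sub_ne_zero.mpr (hθ m n (by omega) hn (by omega))
      obtain ⟨u1, hu1, e⟩ := ih (by omega)
        (u0 - (s / (θ m - θ n)) • (A (w m) - θ m • w m))
        (sub_mem hu0 (Submodule.smul_mem _ _ (key' m (by omega))))
      refine ⟨(s / (θ m - θ n)) • w m + u1, add_mem (Submodule.smul_mem _ _ (mem_Wsp t (by omega)))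
        (Wsp_mono t (by omega) hu1), ?_⟩
      have hs : s = (s / (θ m - θ n)) * (θ m - θ n) := by field_simp
      have e2 : A u1 = u0 - (s / (θ m - θ n)) • (A (w m) - θ m • w m) + θ n • u1 := by
        rw [← e]; simp
      change _ = s • w m + u0
      rw [map_add, map_smul, e2]
      conv_rhs => rw [hs]
      module
  have hv : ∀ n : Fin (d + 1), ∃ v, v - w n ∈ Wsp t n ∧ A v = θ n • v := by
    intro n
    have hn : (n : ℕ) ≤ d := by omega
    obtain ⟨u, hu, e⟩ := solv n hn n le_rfl _ (key' n hn)
    refine ⟨w n - u, ?_, ?_⟩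
    · rw [sub_sub_cancel_left]; exact neg_mem hu
    · have : A u = A (w n) - θ n • w n + θ n • u := by rw [← e]; simp
      rw [map_sub, this]
      module
  choose v hvW hvA using hv
  have hv0 : ∀ n, v n ≠ 0 := by
    intro n h
    have := hvW n
    rw [h, zero_sub] at this
    exact pow_not_mem_Wsp t ht (n := n) (by omega) (neg_mem_iff.mp this)
  have hθinj : Function.Injective (fun i : Fin (d + 1) => θ (i : ℕ)) := by
    intro i j h
    by_contra hne
    exact hθ i j (by omega) (by omega) (fun h => hne (Fin.ext h)) h
  have hli : LinearIndependent F v :=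
    Module.End.eigenvectors_linearIndependent' A (fun i : Fin (d + 1) => θ (i : ℕ)) hθinj v
      (fun i => ⟨Module.End.mem_eigenspace_iff.mpr (hvA i), hv0 i⟩)
  let bas : Module.Basis (Fin (d + 1)) F (Fin (d + 1) → F) :=
    basisOfLinearIndependentOfCardEqFinrank hli (by simp)
  have hbas : ∀ i, bas i = v i := by
    intro i
    simp [bas]
  -- the bilinear form
  let k : ℕ → F := fun x => ∏ h ∈ Finset.range x, b h / c (h + 1)
  have hbne : ∀ h, h < d → b h ≠ 0 := by
    intro h hh
    have := hirr.2 ⟨h, by omega⟩ ⟨h + 1, by omega⟩ (by simp)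
    simpa [hM, triMat] using this
  have hcne : ∀ h, h < d → c (h + 1) ≠ 0 := by
    intro h hh
    have := hirr.2 ⟨h + 1, by omega⟩ ⟨h, by omega⟩ (by simp)
    have n2 : ¬ (h + 1 + 1 = h) := by omega
    simpa [hM, triMat, n2] using this
  have hkne : ∀ x, x ≤ d → k x ≠ 0 := by
    intro x hx
    refine Finset.prod_ne_zero_iff.mpr ?_
    intro h hh
    have := Finset.mem_range.mp hh
    exact div_ne_zero (hbne h (by omega)) (hcne h (by omega))
  have hkb : ∀ x, x < d → k (x + 1) * c (x + 1) = k x * b x := by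
    intro x hx
    simp only [k, Finset.prod_range_succ]
    have := hcne x hx
    field_simp
  have hsym : ∀ i j : Fin (d + 1), k i * M i j = k j * M j i := by
    intro i j
    simp only [hM, triMat, Matrix.of_apply]
    by_cases e : (i : ℕ) = j
    · simp [e]
    by_cases e1 : (i : ℕ) + 1 = j
    · have := hkb i (by omega)
      rw [e1] at this
      have n1 : ¬ ((j : ℕ) = i) := by omega
      have n2 : ¬ ((j : ℕ) + 1 = i) := by omega
      simp [e, e1, n1, n2, this]
    by_cases e2 : (j : ℕ) + 1 = i
    · have := hkb j (by omega)
      rw [e2] at this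
      have n1 : ¬ ((j : ℕ) = i) := by omega
      simp [e, e1, n1, e2, this]
    · have n1 : ¬ ((j : ℕ) = i) := by omega
      simp [e, e1, n1, e2]
  let B : (Fin (d + 1) → F) → (Fin (d + 1) → F) → F := fun u u' => ∑ x : Fin (d + 1), k x * (u x * u' x)
  have Badd : ∀ u1 u2 u', B (u1 + u2) u' = B u1 u' + B u2 u' := by
    intro u1 u2 u'
    simp only [B, ← Finset.sum_add_distrib, Pi.add_apply]
    exact Finset.sum_congr rfl fun j _ => by ring
  have Bsub : ∀ u1 u2 u', B (u1 - u2) u' = B u1 u' - B u2 u' := by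
    intro u1 u2 u'
    simp only [B, ← Finset.sum_sub_distrib, Pi.sub_apply]
    exact Finset.sum_congr rfl fun j _ => by ring
  have Bsmul : ∀ (s : F) u u', B (s • u) u' = s * B u u' := by
    intro s u u'
    simp only [B, Finset.mul_sum, Pi.smul_apply, smul_eq_mul]
    exact Finset.sum_congr rfl fun j _ => by ring
  have Bcomm : ∀ u u', B u u' = B u' u := by
    intro u u'
    exact Finset.sum_congr rfl fun j _ => by ring
  have BD : ∀ u u', B (D u) u' = B u (D u') := by
    intro u u'
    simp only [B, hDa]
    exact Finset.sum_congr rfl fun j _ => by ring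
  have BA : ∀ u u', B (A u) u' = B u (A u') := by
    intro u u'
    simp only [B, hAa, Matrix.mulVec, dotProduct, Finset.mul_sum, Finset.sum_mul]
    rw [Finset.sum_comm]
    refine Finset.sum_congr rfl fun j _ => Finset.sum_congr rfl fun i _ => ?_
    linear_combination (u j * u' i) * hsym i j
  have BW : ∀ j : Fin (d + 1), ∀ u ∈ Wsp t j, B u (v j) = 0 := by
    intro j u hu
    obtain ⟨u', -, rfl⟩ := solv j (by omega) j le_rfl u hu
    rw [Bsub, BA, hvA, Bsmul, Bcomm u', Bsmul, Bcomm]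
    ring
  have Borth : ∀ i j, i ≠ j → B (v i) (v j) = 0 := by
    intro i j hij
    have h := BA (v i) (v j)
    rw [hvA, hvA, Bsmul, Bcomm (v i) (θ j • v j), Bsmul, Bcomm (v j)] at h
    have hne : θ i - θ j ≠ 0 := sub_ne_zero.mpr (fun h => hij (hθinj h))
    have : (θ i - θ j) * B (v i) (v j) = 0 := by linear_combination h
    exact (mul_eq_zero.mp this).resolve_left hne
  have Bcoord : ∀ u j, B u (v j) = bas.repr u j * B (v j) (v j) := by
    intro u j
    let L : (Fin (d + 1) → F) →ₗ[F] F :=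
      { toFun := fun u => B u (v j)
        map_add' := fun u1 u2 => Badd u1 u2 _
        map_smul' := fun s u => Bsmul s u _ }
    have hL : ∀ u, L u = B u (v j) := fun _ => rfl
    rw [← hL u]
    conv_lhs => rw [← bas.sum_repr u]
    rw [map_sum, Finset.sum_eq_single j]
    · rw [map_smul, hbas, hL, smul_eq_mul]
    · intro i _ hij
      rw [map_smul, hbas, hL, Borth i j hij, smul_zero]
    · simp
  have Bne : ∀ j, B (v j) (v j) ≠ 0 := by
    intro j h
    apply hv0 j
    ext x
    have := Bcoord (Pi.single x 1) j
    rw [h, mul_zero] at this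
    simp only [B] at this
    rw [Finset.sum_eq_single x] at this
    · simpa [hkne x (by omega)] using this
    · intro y _ hy
      simp [Pi.single_eq_of_ne hy]
    · simp
  have hDv : ∀ i : Fin (d + 1), D (v i) - w (i + 1) ∈ Wsp t (i + 1) := by
    intro i
    have := hDW _ _ (hvW i)
    rwa [map_sub, hDw] at this
  have S0 : ∀ i j : Fin (d + 1), (i : ℕ) + 1 < j → B (D (v i)) (v j) = 0 := by
    intro i j hij
    apply BW
    have := add_mem (Wsp_mono t (by omega) (hDv i)) (mem_Wsp t hij)
    simpa [w] using this
  have S1 : ∀ i j : Fin (d + 1), (i : ℕ) + 1 = j → B (D (v i)) (v j) ≠ 0 := by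
    intro i j hij
    have h1 := hDv i
    have h2 := hvW j
    rw [hij] at h1
    have h3 := BW j _ (sub_mem h1 h2)
    rw [sub_sub_sub_cancel_right, Bsub] at h3
    rw [sub_eq_zero.mp h3]
    exact Bne j
  have hmat : ∀ i j, LinearMap.toMatrix bas bas D i j * B (v i) (v i) = B (D (v j)) (v i) := by
    intro i j
    rw [LinearMap.toMatrix_apply, hbas, ← Bcoord]
  have hflip : ∀ i j, B (D (v j)) (v i) = B (D (v i)) (v j) := by
    intro i j
    rw [BD, Bcomm]
  have hrepr : ∀ u i, bas.repr (A u) i = θ i * bas.repr u i := by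
    intro u i
    have := Bcoord (A u) i
    rw [BA, hvA, Bcomm, Bsmul, Bcomm, Bcoord u i] at this
    apply mul_right_cancel₀ (Bne i)
    rw [← this]
    ring
  refine ⟨⟨⟨Pi.basisFun F _, ?_, ?_⟩, ⟨bas, ⟨?_, ?_⟩, ?_⟩⟩, ?_⟩
  · rw [hA, LinearMap.toMatrix_eq_toMatrix', LinearMap.toMatrix'_toLin']
    exact hirr
  · rw [hD, LinearMap.toMatrix_eq_toMatrix', LinearMap.toMatrix'_toLin']
    exact Matrix.isDiag_diagonal _
  · intro i j hij
    have h := hmat i j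
    have : B (D (v j)) (v i) = 0 := by
      rcases hij with hij | hij
      · rw [hflip]; exact S0 i j hij
      · exact S0 j i hij
    rw [this] at h
    exact (mul_eq_zero.mp h).resolve_right (Bne i)
  · intro i j hij h0
    have h := hmat i j
    have : B (D (v j)) (v i) ≠ 0 := by
      rcases hij with hij | hij
      · rw [hflip]; exact S1 i j hij
      · exact S1 j i hij
    rw [h0, zero_mul] at h
    exact this h.symm
  · intro i j hij
    rw [LinearMap.toMatrix_apply, hrepr, Module.Basis.repr_self, Finsupp.single_eq_of_ne hij,
      mul_zero]
  · let E : Fin (d + 1) → Module.End F (Fin (d + 1) → F) := fun i =>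
      (bas.coord i).smulRight (bas i)
    have hE : ∀ i u, E i u = bas.repr u i • bas i := fun i u => rfl
    refine ⟨E, ⟨?_, ?_⟩, ?_, hθinj, ?_⟩
    · intro i j
      apply LinearMap.ext
      intro u
      rw [Module.End.mul_apply, hE, hE, map_smul, Module.Basis.repr_self]
      by_cases h : i = j
      · subst h
        simp [hE]
      · simp [h]
    · intro i
      have : LinearMap.range (E i) = Submodule.span F {bas i} := by
        apply le_antisymm
        · rintro _ ⟨u, rfl⟩
          rw [hE]
          exact Submodule.smul_mem _ _ (Submodule.mem_span_singleton_self _)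
        · rw [Submodule.span_singleton_le_iff_mem]
          exact ⟨bas i, by rw [hE]; simp⟩
      rw [this]
      exact finrank_span_singleton (bas.ne_zero i)
    · apply LinearMap.ext
      intro u
      rw [LinearMap.sum_apply]
      simp only [hE, Module.End.one_apply]
      exact bas.sum_repr u
    · intro i
      apply LinearMap.ext
      intro u
      rw [Module.End.mul_apply, LinearMap.smul_apply, hE, map_smul, hbas, hvA]
      exact smul_comm _ _ _

end abs

section alg
variable {F : Type*} [Field F]

/-- Auxiliary expression `b u - b⁻¹ u⁻¹`. -/
def Gq (b u : F) : F := b * u - b⁻¹ * u⁻¹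

/-- Auxiliary expression `b u + b⁻¹ u⁻¹`. -/
def Tq (b u : F) : F := b * u + b⁻¹ * u⁻¹

lemma alg_vi_mid {a b c q X D bx cx : F} (ha : a ≠ 0) (hb : b ≠ 0) (hc : c ≠ 0) (hq : q ≠ 0)
    (hX : X ≠ 0) (hD : D ≠ 0) (hG : Gq b (X ^ 2 / D) ≠ 0)
    (hB : bx * (Gq b (X ^ 2 / D) * Gq b (X ^ 2 / D * q)) = (D / X - X / D) * Gq b (X / D) *
      (c * (X * q) - a⁻¹ * b⁻¹ * (D / X)) * (X⁻¹ * q⁻¹ - a * b * c⁻¹ * (X / D)))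
    (hC : cx * (Gq b (X ^ 2 / D / q) * Gq b (X ^ 2 / D)) = (X - X⁻¹) * Gq b X *
      (a⁻¹ * (X / D / q) - b⁻¹ * c⁻¹ * X⁻¹) * (b * X - a * c * (D / X * q))) :
    cx * (Tq b (X ^ 2 / D / q ^ 2) - Tq b (X ^ 2 / D))
      - bx * (Tq b (X ^ 2 / D) - Tq b (X ^ 2 / D * q ^ 2))
      = (q - q⁻¹) * ((a * q / D - a⁻¹ * D / q) * Tq b (X ^ 2 / D)
        - ((b + b⁻¹) * (a * q - a⁻¹ * q⁻¹) - (c + c⁻¹) * (D - D⁻¹))) := by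
  apply mul_left_cancel₀ hG
  unfold Gq Tq at *
  linear_combination (norm := skip) (q⁻¹ - q) * hC - (q⁻¹ - q) * hB
  field_simp
  ring

lemma alg_vi_zero {a b c q D bx : F} (ha : a ≠ 0) (hb : b ≠ 0) (hc : c ≠ 0) (hq : q ≠ 0)
    (hD : D ≠ 0)
    (hB : bx * Gq b (q / D) = (D - D⁻¹) *
      (c * q - a⁻¹ * b⁻¹ * D) * (q⁻¹ - a * b * c⁻¹ * D⁻¹)) :
    - bx * (Tq b D⁻¹ - Tq b (D⁻¹ * q ^ 2))
      = (q - q⁻¹) * ((a * q / D - a⁻¹ * D / q) * Tq b D⁻¹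
        - ((b + b⁻¹) * (a * q - a⁻¹ * q⁻¹) - (c + c⁻¹) * (D - D⁻¹))) := by
  unfold Gq Tq at *
  linear_combination (norm := skip) - (q⁻¹ - q) * hB
  field_simp
  ring

lemma alg_vi_top {a b c q D cx : F} (ha : a ≠ 0) (hb : b ≠ 0) (hc : c ≠ 0) (hq : q ≠ 0)
    (hD : D ≠ 0)
    (hC : cx * Gq b (D / q) = (D - D⁻¹) *
      (a⁻¹ * q⁻¹ - b⁻¹ * c⁻¹ * D⁻¹) * (b * D - a * c * q)) :
    cx * (Tq b (D / q ^ 2) - Tq b D)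
      = (q - q⁻¹) * ((a * q / D - a⁻¹ * D / q) * Tq b D
        - ((b + b⁻¹) * (a * q - a⁻¹ * q⁻¹) - (c + c⁻¹) * (D - D⁻¹))) := by
  unfold Gq Tq at *
  linear_combination (norm := skip) (q⁻¹ - q) * hC
  field_simp
  ring

lemma alg_vii {a b c q X D bx cx : F} (ha : a ≠ 0) (hb : b ≠ 0) (hc : c ≠ 0) (hq : q ≠ 0)
    (hX : X ≠ 0) (hD : D ≠ 0) (hG : Gq b (X ^ 2 / D / q) ≠ 0)
    (hB : bx * (Gq b (X ^ 2 / D / q ^ 2) * Gq b (X ^ 2 / D / q)) =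
      (D * q / X - X / D / q) * Gq b (X / D / q) *
      (c * X - a⁻¹ * b⁻¹ * (D * q / X)) * (X⁻¹ - a * b * c⁻¹ * (X / D / q)))
    (hC : cx * (Gq b (X ^ 2 / D / q) * Gq b (X ^ 2 / D)) = (X - X⁻¹) * Gq b X *
      (a⁻¹ * (X / D / q) - b⁻¹ * c⁻¹ * X⁻¹) * (b * X - a * c * (D / X * q))) :
    cx * (Tq b (X ^ 2 / D / q ^ 2) - Tq b (X ^ 2 / D * q ^ 2))
      - bx * (Tq b (X ^ 2 / D / q ^ 4) - Tq b (X ^ 2 / D))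
      - (q - q⁻¹) * (a / D / q - a⁻¹ * D * q) * (Tq b (X ^ 2 / D / q ^ 2) + Tq b (X ^ 2 / D))
      = (q ^ 2 - (q ^ 2)⁻¹) * ((D * q - (D * q)⁻¹) * (c + c⁻¹) - (a - a⁻¹) * (b + b⁻¹)) := by
  apply mul_left_cancel₀ hG
  unfold Gq Tq at *
  linear_combination (norm := skip) ((q ^ 2)⁻¹ - q ^ 2) * hC - ((q ^ 2)⁻¹ - q ^ 2) * hB
  field_simp
  ring

/-- The scalar `ω`. -/
def omq (a b c q D : F) : F :=
  -(q - q⁻¹) ^ 2 * ((D * q + (D * q)⁻¹) * (c + c⁻¹) + (a + a⁻¹) * (b + b⁻¹))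

/-- The scalar `η*`. -/
def etq (a b c q D : F) : F :=
  (q - q⁻¹) * (q ^ 2 - (q ^ 2)⁻¹) * ((D * q + (D * q)⁻¹) * (a + a⁻¹) + (b + b⁻¹) * (c + c⁻¹))

lemma alg_aw_mid {a b c q X D bx cx : F} (ha : a ≠ 0) (hb : b ≠ 0) (hc : c ≠ 0) (hq : q ≠ 0)
    (hX : X ≠ 0) (hD : D ≠ 0) (hG : Gq b (X ^ 2 / D) ≠ 0)
    (hB : bx * (Gq b (X ^ 2 / D) * Gq b (X ^ 2 / D * q)) = (D / X - X / D) * Gq b (X / D) *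
      (c * (X * q) - a⁻¹ * b⁻¹ * (D / X)) * (X⁻¹ * q⁻¹ - a * b * c⁻¹ * (X / D)))
    (hC : cx * (Gq b (X ^ 2 / D / q) * Gq b (X ^ 2 / D)) = (X - X⁻¹) * Gq b X *
      (a⁻¹ * (X / D / q) - b⁻¹ * c⁻¹ * X⁻¹) * (b * X - a * c * (D / X * q))) :
    (a / D + a⁻¹ * D - bx - cx) *
      ((2 - (q ^ 2 + (q ^ 2)⁻¹)) * Tq b (X ^ 2 / D) ^ 2 + (q ^ 2 - (q ^ 2)⁻¹) ^ 2)
      = omq a b c q D * Tq b (X ^ 2 / D) + etq a b c q D := by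
  apply mul_left_cancel₀ hG
  unfold Gq Tq omq etq at *
  linear_combination (norm := skip)
    ((q - q⁻¹) ^ 2 * (b * (X ^ 2 / D * q) - b⁻¹ * (X ^ 2 / D * q)⁻¹)) * hC
    + ((q - q⁻¹) ^ 2 * (b * (X ^ 2 / D / q) - b⁻¹ * (X ^ 2 / D / q)⁻¹)) * hB
  field_simp
  ring

lemma alg_aw_zero {a b c q D bx : F} (ha : a ≠ 0) (hb : b ≠ 0) (hc : c ≠ 0) (hq : q ≠ 0)
    (hD : D ≠ 0)
    (hB : bx * Gq b (q / D) = (D - D⁻¹) *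
      (c * q - a⁻¹ * b⁻¹ * D) * (q⁻¹ - a * b * c⁻¹ * D⁻¹)) :
    (a / D + a⁻¹ * D - bx) *
      ((2 - (q ^ 2 + (q ^ 2)⁻¹)) * Tq b D⁻¹ ^ 2 + (q ^ 2 - (q ^ 2)⁻¹) ^ 2)
      = omq a b c q D * Tq b D⁻¹ + etq a b c q D := by
  unfold Gq Tq omq etq at *
  linear_combination (norm := skip)
    ((q - q⁻¹) ^ 2 * (b * (D⁻¹ / q) - b⁻¹ * (D⁻¹ / q)⁻¹)) * hB
  field_simp
  ring

lemma alg_aw_top {a b c q D cx : F} (ha : a ≠ 0) (hb : b ≠ 0) (hc : c ≠ 0) (hq : q ≠ 0)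
    (hD : D ≠ 0)
    (hC : cx * Gq b (D / q) = (D - D⁻¹) *
      (a⁻¹ * q⁻¹ - b⁻¹ * c⁻¹ * D⁻¹) * (b * D - a * c * q)) :
    (a / D + a⁻¹ * D - cx) *
      ((2 - (q ^ 2 + (q ^ 2)⁻¹)) * Tq b D ^ 2 + (q ^ 2 - (q ^ 2)⁻¹) ^ 2)
      = omq a b c q D * Tq b D + etq a b c q D := by
  unfold Gq Tq omq etq at *
  linear_combination (norm := skip)
    ((q - q⁻¹) ^ 2 * (b * (D * q) - b⁻¹ * (D * q)⁻¹)) * hC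
  field_simp
  ring

lemma alg_rho {b q u : F} (hb : b ≠ 0) (hq : q ≠ 0) (hu : u ≠ 0) :
    Tq b (u * q ^ 2) ^ 2 - (q ^ 2 + (q ^ 2)⁻¹) * Tq b u * Tq b (u * q ^ 2) + Tq b u ^ 2
      = - (q ^ 2 - (q ^ 2)⁻¹) ^ 2 := by
  unfold Tq
  field_simp
  ring

lemma alg_sub {b u v : F} (hb : b ≠ 0) (hu : u ≠ 0) (hv : v ≠ 0) :
    Tq b (u * v) - Tq b (u / v) = (v - v⁻¹) * Gq b u := by
  unfold Tq Gq
  field_simp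
  ring

lemma Gq_ne {b q : F} (hb : b ≠ 0) (hq : q ≠ 0) (n : ℤ) (h : b ^ 2 ≠ q ^ (2 * (-n))) :
    Gq b (q ^ n) ≠ 0 := by
  intro e
  apply h
  have hz : q ^ n ≠ 0 := zpow_ne_zero _ hq
  rw [mul_comm, zpow_mul, zpow_neg]
  unfold Gq at e
  rw [show ((q ^ n)⁻¹ ^ (2 : ℤ)) = (q ^ n)⁻¹ ^ 2 from zpow_ofNat _ 2]
  field_simp at e ⊢
  linear_combination e

lemma triMat_mulVec {d : ℕ} (a b c : ℕ → F) (hc : c 0 = 0) (hb : b d = 0) (f : ℤ → F)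
    (i : Fin (d + 1)) :
    (triMat d a b c).mulVec (fun x => f ((x : ℕ) : ℤ)) i
      = c i * f ((i : ℕ) - 1 : ℤ) + a i * f ((i : ℕ) : ℤ) + b i * f ((i : ℕ) + 1 : ℤ) := by
  have h : ∀ j : Fin (d + 1), triMat d a b c i j * f ((j : ℕ) : ℤ)
      = (if (j : ℕ) + 1 = i then c i * f ((i : ℕ) - 1 : ℤ) else 0)
        + (if (i : ℕ) = j then a i * f ((i : ℕ) : ℤ) else 0)
        + (if (i : ℕ) + 1 = j then b i * f ((i : ℕ) + 1 : ℤ) else 0) := by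
    intro j
    simp only [triMat, Matrix.of_apply]
    by_cases e : (i : ℕ) = j
    · have n1 : ¬ ((j : ℕ) + 1 = i) := by omega
      have n2 : ¬ ((i : ℕ) + 1 = j) := by omega
      rw [if_pos e, if_pos e, if_neg n1, if_neg n2, e]
      ring
    by_cases e1 : (i : ℕ) + 1 = j
    · have n1 : ¬ ((j : ℕ) + 1 = i) := by omega
      rw [if_neg e, if_neg e, if_pos e1, if_pos e1, if_neg n1,
        show (((j : ℕ) : ℤ)) = (i : ℕ) + 1 by omega]
      ring
    by_cases e2 : (j : ℕ) + 1 = i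
    · rw [if_neg e, if_neg e, if_neg e1, if_pos e2, if_neg e1, if_pos e2, ← e2]
      push_cast
      ring_nf
    · rw [if_neg e, if_neg e, if_neg e1, if_neg e2, if_neg e1, if_neg e2]
      ring
  simp only [Matrix.mulVec, dotProduct]
  rw [Finset.sum_congr rfl fun j _ => h j]
  rw [Finset.sum_add_distrib, Finset.sum_add_distrib]
  congr 1
  · congr 1
    · rw [Fin.sum_univ_eq_sum_range
        (fun j => if j + 1 = (i : ℕ) then c i * f ((i : ℕ) - 1 : ℤ) else 0)]
      rcases Nat.eq_zero_or_pos (i : ℕ) with h0 | h0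
      · rw [h0, hc]
        simp
      · rw [Finset.sum_eq_single ((i : ℕ) - 1)]
        · rw [if_pos (by omega)]
        · intro k _ hk
          rw [if_neg (by omega)]
        · intro hk
          exact absurd (Finset.mem_range.mpr (by omega)) hk
    · rw [Fin.sum_univ_eq_sum_range
        (fun j => if (i : ℕ) = j then a i * f ((i : ℕ) : ℤ) else 0)]
      rw [Finset.sum_ite_eq, if_pos (Finset.mem_range.mpr i.isLt)]
  · rw [Fin.sum_univ_eq_sum_range
        (fun j => if (i : ℕ) + 1 = j then b i * f ((i : ℕ) + 1 : ℤ) else 0)]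
    rw [Finset.sum_ite_eq]
    split_ifs with h1
    · rfl
    · have : (i : ℕ) = d := by
        have := i.isLt
        rw [Finset.mem_range] at h1
        omega
      rw [this, hb, zero_mul]

end alg

/-- Proposition 5.3 of the paper (q-Racah type). Under the stated nonvanishing
hypotheses on `a, b, c, q`, the q-Racah data satisfy the conditions of the second
main theorem with `β = q² + q⁻²`, `γ = γ* = 0`, `θ_{-1} = aq^{-d-2} + a⁻¹q^{d+2}`,
`θ*_{-1} = bq^{-d-2} + b⁻¹q^{d+2}`, `θ*_{d+1} = bq^{d+2} + b⁻¹q^{-d-2}`, and the stated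
`a*_0`; consequently the corresponding tridiagonal/diagonal pair is a Leonard pair
on `𝔽^{d+1}`, with the tridiagonal member multiplicity-free with eigenvalues
`θ 0, …, θ d`. -/
theorem qRacah_type {F : Type*} [Field F] (d : ℕ) (hd : 1 ≤ d)
    (a b c q : F) (ha : a ≠ 0) (hb : b ≠ 0) (hc : c ≠ 0) (hq : q ≠ 0)
    (hq1 : ∀ i : ℤ, 1 ≤ i → i ≤ d → q ^ (2 * i) ≠ 1)
    (ha2 : ∀ i : ℤ, 1 - (d : ℤ) ≤ i → i ≤ (d : ℤ) - 1 → a ^ 2 ≠ q ^ (2 * i))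
    (hb2 : ∀ i : ℤ, 1 - (d : ℤ) ≤ i → i ≤ (d : ℤ) - 1 → b ^ 2 ≠ q ^ (2 * i))
    (habc : ∀ i : ℤ, 1 ≤ i → i ≤ d →
      a * b * c ≠ q ^ ((d : ℤ) + 1 - 2 * i) ∧ a⁻¹ * b * c ≠ q ^ ((d : ℤ) + 1 - 2 * i) ∧
      a * b⁻¹ * c ≠ q ^ ((d : ℤ) + 1 - 2 * i) ∧ a * b * c⁻¹ ≠ q ^ ((d : ℤ) + 1 - 2 * i)) :
    let θ : ℤ → F := fun i => a * q ^ (2 * i - (d : ℤ)) + a⁻¹ * q ^ ((d : ℤ) - 2 * i)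
    let θs : ℤ → F := fun i => b * q ^ (2 * i - (d : ℤ)) + b⁻¹ * q ^ ((d : ℤ) - 2 * i)
    let bseq : ℕ → F := fun i =>
      if i = 0 then
        (q ^ (d : ℤ) - q ^ (-(d : ℤ))) * (c * q - a⁻¹ * b⁻¹ * q ^ (d : ℤ)) *
          (q⁻¹ - a * b * c⁻¹ * q ^ (-(d : ℤ))) /
          (b * q ^ (1 - (d : ℤ)) - b⁻¹ * q ^ ((d : ℤ) - 1))
      else if i = d then 0
      else
        (q ^ ((d : ℤ) - (i : ℤ)) - q ^ ((i : ℤ) - (d : ℤ))) *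
          (b * q ^ ((i : ℤ) - (d : ℤ)) - b⁻¹ * q ^ ((d : ℤ) - (i : ℤ))) *
          (c * q ^ ((i : ℤ) + 1) - a⁻¹ * b⁻¹ * q ^ ((d : ℤ) - (i : ℤ))) *
          (q ^ (-(i : ℤ) - 1) - a * b * c⁻¹ * q ^ ((i : ℤ) - (d : ℤ))) /
          ((b * q ^ (2 * (i : ℤ) - (d : ℤ)) - b⁻¹ * q ^ ((d : ℤ) - 2 * (i : ℤ))) *
            (b * q ^ (2 * (i : ℤ) - (d : ℤ) + 1) - b⁻¹ * q ^ ((d : ℤ) - 2 * (i : ℤ) - 1)))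
    let cseq : ℕ → F := fun i =>
      if i = 0 then 0
      else if i = d then
        (q ^ (d : ℤ) - q ^ (-(d : ℤ))) * (a⁻¹ * q⁻¹ - b⁻¹ * c⁻¹ * q ^ (-(d : ℤ))) *
          (b * q ^ (d : ℤ) - a * c * q) /
          (b * q ^ ((d : ℤ) - 1) - b⁻¹ * q ^ (1 - (d : ℤ)))
      else
        (q ^ (i : ℤ) - q ^ (-(i : ℤ))) * (b * q ^ (i : ℤ) - b⁻¹ * q ^ (-(i : ℤ))) *
          (a⁻¹ * q ^ ((i : ℤ) - (d : ℤ) - 1) - b⁻¹ * c⁻¹ * q ^ (-(i : ℤ))) *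
          (b * q ^ (i : ℤ) - a * c * q ^ ((d : ℤ) - (i : ℤ) + 1)) /
          ((b * q ^ (2 * (i : ℤ) - (d : ℤ) - 1) - b⁻¹ * q ^ ((d : ℤ) - 2 * (i : ℤ) + 1)) *
            (b * q ^ (2 * (i : ℤ) - (d : ℤ)) - b⁻¹ * q ^ ((d : ℤ) - 2 * (i : ℤ))))
    let aseq : ℕ → F := fun i => θ 0 - bseq i - cseq i
    let β : F := q ^ (2 : ℤ) + q ^ (-2 : ℤ)
    let astar0 : F :=
      ((b + b⁻¹) * (a * q - a⁻¹ * q⁻¹) - (c + c⁻¹) * (q ^ (d : ℤ) - q ^ (-(d : ℤ)))) /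
        (a * q ^ (1 - (d : ℤ)) - a⁻¹ * q ^ ((d : ℤ) - 1))
    (∃ Ω : F, Thm2Conds d θ θs aseq bseq cseq β 0 0 astar0 Ω) ∧
    θ (-1) = a * q ^ (-(d : ℤ) - 2) + a⁻¹ * q ^ ((d : ℤ) + 2) ∧
    θs (-1) = b * q ^ (-(d : ℤ) - 2) + b⁻¹ * q ^ ((d : ℤ) + 2) ∧
    θs ((d : ℤ) + 1) = b * q ^ ((d : ℤ) + 2) + b⁻¹ * q ^ (-(d : ℤ) - 2) ∧
    IsIrredTridiag (triMat d aseq bseq cseq) ∧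
    IsLeonardPair d (Matrix.toLin' (triMat d aseq bseq cseq))
      (Matrix.toLin' (Matrix.diagonal fun i : Fin (d + 1) => θs ((i : ℕ) : ℤ))) ∧
    ∃ E : Fin (d + 1) → Module.End F (Fin (d + 1) → F),
      IdempSysOf d (Matrix.toLin' (triMat d aseq bseq cseq))
        (fun i : Fin (d + 1) => θ ((i : ℕ) : ℤ)) E := by

  intro θ θs bseq cseq aseq β astar0
  have hD : q ^ (d : ℤ) ≠ 0 := zpow_ne_zero _ hq
  have hG : ∀ n : ℤ, 1 - (d : ℤ) ≤ n → n ≤ (d : ℤ) - 1 → Gq b (q ^ n) ≠ 0 := fun n h1 h2 =>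
    Gq_ne hb hq n (hb2 (-n) (by omega) (by omega))
  have hGa : ∀ n : ℤ, 1 - (d : ℤ) ≤ n → n ≤ (d : ℤ) - 1 → Gq a (q ^ n) ≠ 0 := fun n h1 h2 =>
    Gq_ne ha hq n (ha2 (-n) (by omega) (by omega))
  have hGf : ∀ (y : F) (n m : ℤ), m = -n → y * q ^ n - y⁻¹ * q ^ m = Gq y (q ^ n) := by
    intro y n m h
    rw [h, zpow_neg]; rfl
  have hθT : ∀ i, θ i = Tq a (q ^ (2 * i - (d : ℤ))) := by
    intro i
    simp only [θ, Tq]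
    rw [← zpow_neg, neg_sub]
  have hθsT : ∀ i, θs i = Tq b (q ^ (2 * i - (d : ℤ))) := by
    intro i
    simp only [θs, Tq]
    rw [← zpow_neg, neg_sub]
  have hqq : ∀ n : ℤ, 1 ≤ n → n ≤ d → q ^ n - q ^ (-n) ≠ 0 := by
    intro n h1 h2 h
    apply hq1 n h1 h2
    rw [two_mul, zpow_add₀ hq]
    rw [zpow_neg] at h
    have : q ^ n ≠ 0 := zpow_ne_zero _ hq
    field_simp at h
    linear_combination h
  have hdist : ∀ y : F, y ≠ 0 → (∀ n : ℤ, 1 - (d : ℤ) ≤ n → n ≤ (d : ℤ) - 1 → Gq y (q ^ n) ≠ 0) →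
      ∀ i j : ℤ, 0 ≤ i → i < j → j ≤ d →
      Tq y (q ^ (2 * i - (d : ℤ))) ≠ Tq y (q ^ (2 * j - (d : ℤ))) := by
    intro y hy hgy i j h0 h1 h2 h
    have e := alg_sub hy (zpow_ne_zero (i + j - d) hq) (zpow_ne_zero (j - i) hq)
    rw [← zpow_add₀ hq, ← zpow_sub₀ hq, show i + j - d + (j - i) = 2 * j - d by ring,
      show i + j - d - (j - i) = 2 * i - d by ring, h, sub_self, ← zpow_neg] at e
    exact mul_ne_zero (hqq (j - i) (by omega) (by omega)) (hgy _ (by omega) (by omega)) e.symm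
  have hθne : ∀ i j : ℤ, 0 ≤ i → i ≤ d → 0 ≤ j → j ≤ d → i ≠ j → θ i ≠ θ j := by
    intro i j hi hi' hj hj' hij
    rw [hθT, hθT]
    rcases lt_or_gt_of_ne hij with h | h
    · exact hdist a ha hGa i j hi h hj'
    · exact (hdist a ha hGa j i hj h hi').symm
  have hθsne : ∀ i j : ℤ, 0 ≤ i → i ≤ d → 0 ≤ j → j ≤ d → i ≠ j → θs i ≠ θs j := by
    intro i j hi hi' hj hj' hij
    rw [hθsT, hθsT]
    rcases lt_or_gt_of_ne hij with h | h
    · exact hdist b hb hG i j hi h hj'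
    · exact (hdist b hb hG j i hj h hi').symm
  have hβ : β = q ^ 2 + (q ^ 2)⁻¹ := by
    simp only [β, zpow_neg, zpow_ofNat]
  have hrec : ∀ y : F, y ≠ 0 → ∀ i : ℤ, Tq y (q ^ (2 * (i - 1) - (d : ℤ)))
      - β * Tq y (q ^ (2 * i - (d : ℤ))) + Tq y (q ^ (2 * (i + 1) - (d : ℤ))) = 0 := by
    intro y hy i
    have hu : q ^ (2 * i - (d : ℤ)) ≠ 0 := zpow_ne_zero _ hq
    rw [show 2 * (i - 1) - (d : ℤ) = (2 * i - d) - 2 by ring,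
      show 2 * (i + 1) - (d : ℤ) = (2 * i - d) + 2 by ring, zpow_sub₀ hq _ 2, zpow_add₀ hq _ 2, hβ,
      zpow_ofNat]
    unfold Tq
    field_simp
    ring
  have hbd : bseq d = 0 := by
    simp only [bseq]
    rw [if_neg (by omega), if_pos trivial]
  have hc0 : cseq 0 = 0 := by simp [cseq]
  -- nonvanishing of the factors
  have f1 : ∀ i : ℤ, 0 ≤ i → i < d → c * q ^ (i + 1) - a⁻¹ * b⁻¹ * q ^ ((d : ℤ) - i) ≠ 0 := by
    intro i h1 h2 h
    apply (habc (i + 1) (by omega) (by omega)).1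
    rw [show (d : ℤ) + 1 - 2 * (i + 1) = (d - i) - (i + 1) by ring, zpow_sub₀ hq _ (i + 1)]
    have n1 : q ^ (i + 1) ≠ 0 := zpow_ne_zero _ hq
    field_simp at h ⊢
    linear_combination h
  have f2 : ∀ i : ℤ, 0 ≤ i → i < d → q ^ (-i - 1) - a * b * c⁻¹ * q ^ (i - (d : ℤ)) ≠ 0 := by
    intro i h1 h2 h
    apply (habc (i + 1) (by omega) (by omega)).2.2.2
    rw [show (d : ℤ) + 1 - 2 * (i + 1) = (-i - 1) - (i - d) by ring, zpow_sub₀ hq (-i - 1)]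
    have n1 : q ^ (i - (d : ℤ)) ≠ 0 := zpow_ne_zero _ hq
    rw [eq_div_iff n1]
    linear_combination -h
  have f3 : ∀ i : ℤ, 1 ≤ i → i ≤ d →
      a⁻¹ * q ^ (i - (d : ℤ) - 1) - b⁻¹ * c⁻¹ * q ^ (-i) ≠ 0 := by
    intro i h1 h2 h
    apply (habc i (by omega) (by omega)).2.1
    rw [show (d : ℤ) + 1 - 2 * i = (-i) - (i - d - 1) by ring, zpow_sub₀ hq (-i)]
    have n1 : q ^ (i - (d : ℤ) - 1) ≠ 0 := zpow_ne_zero _ hq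
    rw [eq_div_iff n1]
    have e : b * c * (b⁻¹ * c⁻¹) = 1 := by field_simp
    linear_combination b * c * h + q ^ (-i) * e
  have f4 : ∀ i : ℤ, 1 ≤ i → i ≤ d →
      b * q ^ i - a * c * q ^ ((d : ℤ) - i + 1) ≠ 0 := by
    intro i h1 h2 h
    apply (habc (d + 1 - i) (by omega) (by omega)).2.2.1
    rw [show (d : ℤ) + 1 - 2 * (d + 1 - i) = i - (d - i + 1) by ring, zpow_sub₀ hq i]
    have n1 : q ^ ((d : ℤ) - i + 1) ≠ 0 := zpow_ne_zero _ hq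
    rw [eq_div_iff n1]
    have e : b * b⁻¹ = 1 := by field_simp
    linear_combination -b⁻¹ * h + q ^ i * e
  -- b_i and c_i are nonzero
  have hbne : ∀ i : ℕ, i < d → bseq i ≠ 0 := by
    intro i hi
    simp only [bseq]
    by_cases h0 : i = 0
    · rw [if_pos h0]
      have e1 := f1 0 le_rfl (by omega)
      have e2 := f2 0 le_rfl (by omega)
      simp only [zero_add, zpow_one, sub_zero, neg_zero, zero_sub, zpow_neg_one] at e1 e2
      refine div_ne_zero (mul_ne_zero (mul_ne_zero (hqq d (by omega) le_rfl) e1) e2) ?_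
      rw [hGf _ _ _ (by ring)]
      exact hG _ (by omega) (by omega)
    · rw [if_neg h0, if_neg (by omega)]
      refine div_ne_zero (mul_ne_zero (mul_ne_zero (mul_ne_zero ?_ ?_) ?_) ?_) (mul_ne_zero ?_ ?_)
      · have := hqq (d - i) (by omega) (by omega)
        rwa [neg_sub] at this
      · rw [hGf _ _ _ (by ring)]
        exact hG _ (by omega) (by omega)
      · exact f1 i (by omega) (by omega)
      · exact f2 i (by omega) (by omega)
      · rw [hGf _ _ _ (by ring)]
        exact hG _ (by omega) (by omega)
      · rw [hGf _ _ _ (by ring)]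
        exact hG _ (by omega) (by omega)
  have hcne : ∀ i : ℕ, 1 ≤ i → i ≤ d → cseq i ≠ 0 := by
    intro i h1 hi
    simp only [cseq]
    rw [if_neg (by omega)]
    by_cases h0 : i = d
    · rw [if_pos h0]
      have e1 := f3 d (by omega) (by omega)
      have e2 := f4 d (by omega) (by omega)
      simp only [zero_add, zpow_one, sub_self, zero_sub, zpow_neg_one] at e1 e2
      refine div_ne_zero (mul_ne_zero (mul_ne_zero (hqq d (by omega) le_rfl) e1) e2) ?_
      rw [hGf _ _ _ (by ring)]
      exact hG _ (by omega) (by omega)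
    · rw [if_neg h0]
      refine div_ne_zero (mul_ne_zero (mul_ne_zero (mul_ne_zero ?_ ?_) ?_) ?_) (mul_ne_zero ?_ ?_)
      · exact hqq i (by omega) (by omega)
      · rw [hGf _ _ _ (by ring)]
        exact hG _ (by omega) (by omega)
      · exact f3 i (by omega) (by omega)
      · exact f4 i (by omega) (by omega)
      · rw [hGf _ _ _ (by ring)]
        exact hG _ (by omega) (by omega)
      · rw [hGf _ _ _ (by ring)]
        exact hG _ (by omega) (by omega)
  -- power bookkeeping
  have p0 : ∀ i : ℤ, q ^ (2 * i - (d : ℤ)) = (q ^ i) ^ 2 / q ^ (d : ℤ) := by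
    intro i
    rw [zpow_sub₀ hq, two_mul, zpow_add₀ hq, sq]
  have p1 : ∀ i : ℤ, q ^ (2 * i - (d : ℤ) + 1) = (q ^ i) ^ 2 / q ^ (d : ℤ) * q := by
    intro i
    rw [zpow_add₀ hq _ 1, p0, zpow_one]
  have pm1 : ∀ i : ℤ, q ^ (2 * i - (d : ℤ) - 1) = (q ^ i) ^ 2 / q ^ (d : ℤ) / q := by
    intro i
    rw [zpow_sub₀ hq _ 1, p0, zpow_one]
  have p2 : ∀ i : ℤ, q ^ (2 * (i + 1) - (d : ℤ)) = (q ^ i) ^ 2 / q ^ (d : ℤ) * q ^ 2 := by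
    intro i
    rw [show 2 * (i + 1) - (d : ℤ) = 2 * i - d + 2 by ring, zpow_add₀ hq _ 2, p0, zpow_ofNat]
  have pm2 : ∀ i : ℤ, q ^ (2 * (i - 1) - (d : ℤ)) = (q ^ i) ^ 2 / q ^ (d : ℤ) / q ^ 2 := by
    intro i
    rw [show 2 * (i - 1) - (d : ℤ) = 2 * i - d - 2 by ring, zpow_sub₀ hq _ 2, p0, zpow_ofNat]
  have pm4 : ∀ i : ℤ, q ^ (2 * (i - 2) - (d : ℤ)) = (q ^ i) ^ 2 / q ^ (d : ℤ) / q ^ 4 := by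
    intro i
    rw [show 2 * (i - 2) - (d : ℤ) = 2 * i - d - 4 by ring, zpow_sub₀ hq _ 4, p0, zpow_ofNat]
  -- cleared forms
  have hB0 : bseq 0 * Gq b (q / q ^ (d : ℤ)) = (q ^ (d : ℤ) - (q ^ (d : ℤ))⁻¹) *
      (c * q - a⁻¹ * b⁻¹ * q ^ (d : ℤ)) * (q⁻¹ - a * b * c⁻¹ * (q ^ (d : ℤ))⁻¹) := by
    have e : q / q ^ (d : ℤ) = q ^ (1 - (d : ℤ)) := by rw [zpow_sub₀ hq, zpow_one]
    rw [e]
    simp only [bseq]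
    rw [if_pos trivial, hGf b (1 - (d : ℤ)) _ (by ring),
      div_mul_cancel₀ _ (hG _ (by omega) (by omega)), zpow_neg]
  have hCd : cseq d * Gq b (q ^ (d : ℤ) / q) = (q ^ (d : ℤ) - (q ^ (d : ℤ))⁻¹) *
      (a⁻¹ * q⁻¹ - b⁻¹ * c⁻¹ * (q ^ (d : ℤ))⁻¹) * (b * q ^ (d : ℤ) - a * c * q) := by
    have e : q ^ (d : ℤ) / q = q ^ ((d : ℤ) - 1) := by rw [zpow_sub₀ hq, zpow_one]
    rw [e]
    simp only [cseq]
    rw [if_neg (by omega), if_pos trivial, hGf b ((d : ℤ) - 1) _ (by ring),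
      div_mul_cancel₀ _ (hG _ (by omega) (by omega)), zpow_neg]
  have hB : ∀ i : ℕ, i < d → bseq i * (Gq b ((q ^ (i : ℤ)) ^ 2 / q ^ (d : ℤ)) *
      Gq b ((q ^ (i : ℤ)) ^ 2 / q ^ (d : ℤ) * q)) =
      (q ^ (d : ℤ) / q ^ (i : ℤ) - q ^ (i : ℤ) / q ^ (d : ℤ)) * Gq b (q ^ (i : ℤ) / q ^ (d : ℤ)) *
      (c * (q ^ (i : ℤ) * q) - a⁻¹ * b⁻¹ * (q ^ (d : ℤ) / q ^ (i : ℤ))) *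
      ((q ^ (i : ℤ))⁻¹ * q⁻¹ - a * b * c⁻¹ * (q ^ (i : ℤ) / q ^ (d : ℤ))) := by
    intro i hi
    by_cases h0 : i = 0
    · subst h0
      simp only [Nat.cast_zero, zpow_zero, one_pow, div_one, one_div, inv_one, one_mul]
      rw [show (q ^ (d : ℤ))⁻¹ * q = q / q ^ (d : ℤ) by rw [div_eq_mul_inv, mul_comm]]
      linear_combination Gq b (q ^ (d : ℤ))⁻¹ * hB0
    · rw [← p1, ← p0]
      simp only [bseq]
      rw [if_neg h0, if_neg (by omega), hGf b (2 * (i : ℤ) - d) _ (by ring),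
        hGf b (2 * (i : ℤ) - d + 1) _ (by ring), hGf b ((i : ℤ) - d) _ (by ring),
        div_mul_cancel₀ _ (mul_ne_zero (hG _ (by omega) (by omega)) (hG _ (by omega) (by omega)))]
      rw [zpow_sub₀ hq (d : ℤ), zpow_sub₀ hq (i : ℤ), zpow_sub₀ hq (-(i : ℤ)), zpow_add₀ hq,
        zpow_neg, zpow_one, div_eq_mul_inv _ q]
  have hC : ∀ i : ℕ, 1 ≤ i → i ≤ d → cseq i * (Gq b ((q ^ (i : ℤ)) ^ 2 / q ^ (d : ℤ) / q) *
      Gq b ((q ^ (i : ℤ)) ^ 2 / q ^ (d : ℤ))) =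
      (q ^ (i : ℤ) - (q ^ (i : ℤ))⁻¹) * Gq b (q ^ (i : ℤ)) *
      (a⁻¹ * (q ^ (i : ℤ) / q ^ (d : ℤ) / q) - b⁻¹ * c⁻¹ * (q ^ (i : ℤ))⁻¹) *
      (b * q ^ (i : ℤ) - a * c * (q ^ (d : ℤ) / q ^ (i : ℤ) * q)) := by
    intro i h1 hi
    by_cases h0 : i = d
    · subst h0
      rw [show (q ^ (i : ℤ)) ^ 2 / q ^ (i : ℤ) = q ^ (i : ℤ) by field_simp, div_self hD, one_mul,
        one_div]
      linear_combination Gq b (q ^ (i : ℤ)) * hCd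
    · rw [← pm1, ← p0]
      simp only [cseq]
      rw [if_neg (by omega), if_neg h0, hGf b (2 * (i : ℤ) - d - 1) _ (by ring),
        hGf b (2 * (i : ℤ) - d) _ (by ring), hGf b (i : ℤ) _ (by ring),
        div_mul_cancel₀ _ (mul_ne_zero (hG _ (by omega) (by omega)) (hG _ (by omega) (by omega)))]
      rw [zpow_sub₀ hq _ 1, zpow_sub₀ hq (i : ℤ), zpow_add₀ hq, zpow_sub₀ hq,
        zpow_neg, zpow_one]
  have hθ0 : θ 0 = a / q ^ (d : ℤ) + a⁻¹ * q ^ (d : ℤ) := by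
    simp only [θ, mul_zero, sub_zero, zero_sub, zpow_neg, div_eq_mul_inv]
  have hθd : θ 1 - θ 0 = (q - q⁻¹) * (a * q / q ^ (d : ℤ) - a⁻¹ * q ^ (d : ℤ) / q) := by
    simp only [θ, mul_zero, mul_one, sub_zero, zero_sub, zpow_neg]
    rw [zpow_sub₀ hq, zpow_sub₀ hq, zpow_ofNat]
    field_simp
    ring
  have hastar : (θ 1 - θ 0) * astar0 = (q - q⁻¹) * ((b + b⁻¹) * (a * q - a⁻¹ * q⁻¹) -
      (c + c⁻¹) * (q ^ (d : ℤ) - (q ^ (d : ℤ))⁻¹)) := by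
    have hne := hGa (1 - d) (by omega) (by omega)
    have e : a * q / q ^ (d : ℤ) - a⁻¹ * q ^ (d : ℤ) / q = Gq a (q ^ (1 - (d : ℤ))) := by
      unfold Gq
      rw [zpow_sub₀ hq, zpow_one, inv_div, mul_div_assoc, mul_div_assoc]
    rw [hθd, e]
    simp only [astar0]
    rw [hGf a (1 - (d : ℤ)) _ (by ring), zpow_neg, mul_assoc, mul_div_cancel₀ _ hne]
  have hvi : ∀ i : ℕ, i ≤ d →
      cseq i * (θs ((i : ℤ) - 1) - θs i) - bseq i * (θs i - θs ((i : ℤ) + 1))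
        = (θ 1 - θ 0) * (θs i - astar0) := by
    intro i hi
    rw [mul_sub (θ 1 - θ 0), hastar, hθd, hθsT, hθsT, hθsT, pm2, p2, p0]
    rcases Nat.eq_zero_or_pos i with h0 | h0
    · subst h0
      have := alg_vi_zero ha hb hc hq hD hB0
      rw [hc0]
      simp only [Nat.cast_zero, zpow_zero, one_pow, one_div]
      linear_combination this
    by_cases h1 : i = d
    · subst h1
      have := alg_vi_top ha hb hc hq hD hCd
      rw [hbd, show (q ^ (i : ℤ)) ^ 2 / q ^ (i : ℤ) = q ^ (i : ℤ) by field_simp]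
      linear_combination this
    · have hG0 := hG (2 * i - d) (by omega) (by omega)
      rw [p0] at hG0
      have := alg_vi_mid ha hb hc hq (zpow_ne_zero _ hq) hD hG0 (hB i (by omega))
        (hC i h0 hi)
      linear_combination this
  have haw : ∀ i : ℕ, i ≤ d →
      aseq i * ((2 - β) * θs i ^ 2 + (q ^ 2 - (q ^ 2)⁻¹) ^ 2)
        = omq a b c q (q ^ (d : ℤ)) * θs i + etq a b c q (q ^ (d : ℤ)) := by
    intro i hi
    simp only [aseq]
    rw [hθ0, hθsT, p0, hβ]
    rcases Nat.eq_zero_or_pos i with h0 | h0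
    · subst h0
      have := alg_aw_zero ha hb hc hq hD hB0
      rw [hc0]
      simp only [Nat.cast_zero, zpow_zero, one_pow, one_div]
      linear_combination this
    by_cases h1 : i = d
    · subst h1
      have := alg_aw_top ha hb hc hq hD hCd
      rw [hbd, show (q ^ (i : ℤ)) ^ 2 / q ^ (i : ℤ) = q ^ (i : ℤ) by field_simp]
      linear_combination this
    · have hG0 := hG (2 * i - d) (by omega) (by omega)
      rw [p0] at hG0
      exact alg_aw_mid ha hb hc hq (zpow_ne_zero _ hq) hD hG0 (hB i (by omega))
        (hC i h0 hi)
  have hθm : θ 0 - θ (-1) = (q - q⁻¹) * (a / q ^ (d : ℤ) / q - a⁻¹ * q ^ (d : ℤ) * q) := by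
    simp only [θ, mul_zero, sub_zero, zero_sub, zpow_neg]
    rw [show (2 * (-1) - (d : ℤ)) = -(d + 2) by ring, show (d : ℤ) - 2 * -1 = d + 2 by ring,
      zpow_neg, zpow_add₀ hq, zpow_ofNat]
    field_simp
    ring
  have hvii : ∀ i : ℕ, 1 ≤ i → i ≤ d →
      cseq i * (θs ((i : ℤ) - 1) - θs ((i : ℤ) + 1)) - bseq (i - 1) * (θs ((i : ℤ) - 2) - θs i)
      - (θ 0 - θ (-1)) * (θs ((i : ℤ) - 1) + θs i)
      = (q ^ 2 - (q ^ 2)⁻¹) * ((q ^ (d : ℤ) * q - (q ^ (d : ℤ) * q)⁻¹) * (c + c⁻¹)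
        - (a - a⁻¹) * (b + b⁻¹)) := by
    intro i h1 hi
    rw [hθm, hθsT, hθsT, hθsT, hθsT, pm2, p2, pm4, p0]
    have hG0 := hG (2 * i - d - 1) (by omega) (by omega)
    rw [pm1] at hG0
    refine alg_vii ha hb hc hq (zpow_ne_zero _ hq) hD hG0 ?_ (hC i h1 hi)
    have hX : q ^ (i : ℤ) ≠ 0 := zpow_ne_zero _ hq
    have := hB (i - 1) (by omega)
    rw [show ((i - 1 : ℕ) : ℤ) = (i : ℤ) - 1 by omega, zpow_sub₀ hq, zpow_one] at this
    rw [show (q ^ (i : ℤ) / q) ^ 2 / q ^ (d : ℤ) = (q ^ (i : ℤ)) ^ 2 / q ^ (d : ℤ) / q ^ 2 by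
        field_simp,
      show (q ^ (i : ℤ)) ^ 2 / q ^ (d : ℤ) / q ^ 2 * q = (q ^ (i : ℤ)) ^ 2 / q ^ (d : ℤ) / q by
        field_simp,
      show q ^ (d : ℤ) / (q ^ (i : ℤ) / q) = q ^ (d : ℤ) * q / q ^ (i : ℤ) by field_simp,
      show q ^ (i : ℤ) / q / q ^ (d : ℤ) = q ^ (i : ℤ) / q ^ (d : ℤ) / q by field_simp,
      show q ^ (i : ℤ) / q * q = q ^ (i : ℤ) by field_simp,
      show (q ^ (i : ℤ) / q)⁻¹ * q⁻¹ = (q ^ (i : ℤ))⁻¹ by field_simp] at this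
    exact this
  have hirr : IsIrredTridiag (triMat d aseq bseq cseq) := by
    constructor
    · intro i j hij
      simp only [triMat, Matrix.of_apply]
      rw [if_neg (by omega), if_neg (by omega), if_neg (by omega)]
    · intro i j hij
      simp only [triMat, Matrix.of_apply]
      rw [if_neg (by omega)]
      by_cases e : (i : ℕ) + 1 = j
      · rw [if_pos e]
        exact hbne i (by omega)
      · rw [if_neg e, if_pos (by omega)]
        exact hcne i (by omega) (by omega)
  refine ⟨⟨_, hθne, ?_, ?_, ?_, hbd, hc0, ?_, hvi, hvii, ?_, ?_⟩, ?_, ?_, ?_, hirr, ?_⟩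
  · intro i h1 h2
    exact hθsne i 0 (by omega) h2 le_rfl (by omega) (by omega)
  · intro i _ _
    rw [hθsT, hθsT, hθsT]
    exact (hrec b hb i).symm
  · intro i h1 h2
    exact mul_ne_zero (hbne _ (by omega)) (hcne i h1 h2)
  · intro i _
    simp only [aseq]
    ring
  · have := hrec a ha 0
    rw [zero_sub, zero_add] at this
    rw [hθT, hθT, hθT]
    exact this.symm
  · intro i _ _
    rw [hθT, hθT, hθT]
    exact hrec a ha i
  · simp only [θ]
    rw [show (2 * (-1) - (d : ℤ)) = -d - 2 by ring, show (d : ℤ) - 2 * -1 = d + 2 by ring]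
  · simp only [θs]
    rw [show (2 * (-1) - (d : ℤ)) = -d - 2 by ring, show (d : ℤ) - 2 * -1 = d + 2 by ring]
  · simp only [θs]
    rw [show (2 * ((d : ℤ) + 1) - (d : ℤ)) = d + 2 by ring,
      show (d : ℤ) - 2 * (d + 1) = -d - 2 by ring]
  · have hadj : ∀ i : ℤ, θs (i + 1) ^ 2 - β * θs i * θs (i + 1) + θs i ^ 2
        = -(q ^ 2 - (q ^ 2)⁻¹) ^ 2 := by
      intro i
      have hX : q ^ (i : ℤ) ≠ 0 := zpow_ne_zero _ hq
      rw [hθsT, hθsT, p2, p0, hβ]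
      exact alg_rho hb hq (div_ne_zero (pow_ne_zero _ hX) hD)
    refine abstract_leonard aseq bseq cseq (fun n : ℕ => θ (n : ℤ))
      (fun i : Fin (d + 1) => θs ((i : ℕ) : ℤ)) β (-(q ^ 2 - (q ^ 2)⁻¹) ^ 2)
      (omq a b c q (q ^ (d : ℤ))) (etq a b c q (q ^ (d : ℤ))) (-((θ 1 - θ 0) * astar0))
      hirr ?_ ?_ ?_ ?_ ?_ ?_
    · intro i j h
      by_contra hne
      have : (i : ℕ) ≠ j := fun h => hne (Fin.ext h)
      exact hθsne (i : ℕ) (j : ℕ) (by omega) (by omega) (by omega) (by omega) (by omega) h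
    · intro i j hi hj hij
      exact hθne i j (by omega) (by omega) (by omega) (by omega) (by omega)
    · intro i _
      have := hrec a ha ((i : ℤ) + 1)
      rw [← hθT, ← hθT, ← hθT, add_sub_cancel_right,
        show (i : ℤ) + 1 + 1 = (i : ℤ) + 2 by ring] at this
      push_cast
      linear_combination this
    · intro i j
      by_cases e : i = j
      · subst e
        have := haw i (by omega)
        simp only [triMat, Matrix.of_apply, if_true]
        linear_combination this
      · have e' : (i : ℕ) ≠ j := fun h => e (Fin.ext h)
        rw [if_neg e]
        by_cases e1 : (i : ℕ) + 1 = j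
        · have := hadj (i : ℕ)
          rw [show (((j : ℕ) : ℤ)) = (i : ℕ) + 1 by omega]
          linear_combination (triMat d aseq bseq cseq i j) * this
        by_cases e2 : (j : ℕ) + 1 = i
        · have := hadj (j : ℕ)
          rw [show (((i : ℕ) : ℤ)) = (j : ℕ) + 1 by omega]
          linear_combination (triMat d aseq bseq cseq i j) * this
        · rw [hirr.1 i j (by omega), zero_mul]
    · ext i
      rw [triMat_mulVec aseq bseq cseq hc0 hbd (fun _ => 1) i]
      simp only [aseq, Nat.cast_zero]
      ring
    · ext i
      rw [triMat_mulVec aseq bseq cseq hc0 hbd θs i]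
      have := hvi i (by omega)
      simp only [aseq, Nat.cast_one]
      linear_combination this

end LeonardPaper
end

section
/- Let 𝔽 be a field, d ≥ 0 an integer, and β, γ* ∈ 𝔽. Let θ*_{−1}, θ*_0, …, θ*_{d+1} be scalars in 𝔽 satisfying γ* = θ*_{i−1} − βθ*_i + θ*_{i+1} for 0 ≤ i ≤ d. Then the scalar p_i = θ*_{i−1}² − βθ*_{i−1}θ*_i + θ*_i² − γ*(θ*_{i−1} + θ*_i) is independent of i for 0 ≤ i ≤ d+1; in fact p_i − p_{i+1} = (θ*_{i−1} − θ*_{i+1})(θ*_{i−1} − βθ*_i + θ*_{i+1} − γ*) = 0 for 0 ≤ i ≤ d. -/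
/-- The claim from the proof of the first main theorem: under the three-term
recurrence, `p i := θs(i-1)² − β θs(i-1) θs(i) + θs(i)² − γ*(θs(i-1) + θs(i))` is
independent of `i` for `0 ≤ i ≤ d+1`; indeed
`p i − p (i+1) = (θs(i-1) − θs(i+1)) (θs(i-1) − β θs(i) + θs(i+1) − γ*) = 0`
for `0 ≤ i ≤ d`. -/
theorem p_independent {F : Type*} [Field F] (d : ℕ) (β γs : F) (θs : ℤ → F)
    (hrec : ∀ i : ℤ, 0 ≤ i → i ≤ d → γs = θs (i - 1) - β * θs i + θs (i + 1)) :
    let p : ℤ → F := fun i =>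
      θs (i - 1) ^ 2 - β * θs (i - 1) * θs i + θs i ^ 2 - γs * (θs (i - 1) + θs i)
    (∀ i : ℤ, 0 ≤ i → i ≤ d →
      p i - p (i + 1) = (θs (i - 1) - θs (i + 1)) * (θs (i - 1) - β * θs i + θs (i + 1) - γs)
        ∧ p i - p (i + 1) = 0) ∧
    ∀ i j : ℤ, 0 ≤ i → i ≤ (d : ℤ) + 1 → 0 ≤ j → j ≤ (d : ℤ) + 1 → p i = p j := by
  intro p
  have h1 : ∀ i : ℤ, p i - p (i + 1) =
      (θs (i - 1) - θs (i + 1)) * (θs (i - 1) - β * θs i + θs (i + 1) - γs) := by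
    intro i
    simp only [p, add_sub_cancel_right]
    ring
  have h2 : ∀ i : ℤ, 0 ≤ i → i ≤ d → p i - p (i + 1) = 0 := by
    intro i hi hd
    rw [h1, ← hrec i hi hd, sub_self, mul_zero]
  have h3 : ∀ n : ℕ, (n : ℤ) ≤ (d : ℤ) + 1 → p n = p 0 := by
    intro n
    induction n with
    | zero => intro _; simp
    | succ k ih =>
      intro hk
      push_cast at hk ⊢
      rw [← ih (by omega)]
      exact (sub_eq_zero.mp (h2 k (by omega) (by omega))).symm
  refine ⟨fun i hi hd => ⟨h1 i, h2 i hi hd⟩, ?_⟩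
  intro i j hi hid hj hjd
  lift i to ℕ using hi
  lift j to ℕ using hj
  rw [h3 i hid, h3 j hjd]
end
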